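/- arXiv:2605.24472 — 6 statements merged into one kernel-verified Lean document; each statement's English description precedes it below -/
import Mathlib

section
/- Let n ≥ 2, p > 1, and let V : ℝⁿ → [0, ∞) be a convex p-homogeneous function such that the measure μ with density e^{-V} with respect to the Lebesgue measure is finite. Set α = (1/n) · e^{(p-1)n/p} · ((p-1)n/p)^{n/p} · Γ(1 - n/p, (p-1)n/p). Then for all convex bodies K, L in ℝⁿ containing the origin and all λ ∈ [0,1], one has μ(λK + (1-λ)L)^α ≥ λ·μ(K)^α + (1-λ)·μ(L)^α. -/
open MeasureTheory Real Set Pointwise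

noncomputable def uiGamma (s x : ℝ) : ℝ := ∫ t in Set.Ioi x, t ^ (s - 1) * Real.exp (-t)

open scoped ENNReal

theorem aux_transport (F G : ℝ → ℝ) (hFc : Continuous F) (hGc : Continuous G)
    (hF0 : ∀ x, 0 ≤ F x) (hG0 : ∀ x, 0 ≤ G x) (R : ℝ)
    (hFR : ∀ x, F x ≠ 0 → x ∈ Ioo (-R) R) (hGR : ∀ x, G x ≠ 0 → x ∈ Ioo (-R) R)
    (hA : 0 < ∫ x, F x) (hB : 0 < ∫ x, G x) (H Φ : ℝ → ℝ≥0∞)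
    (h0 : ∀ x, F x = 0 → Φ x = 0)
    (hΦ : ∀ a b, 0 < F a → 0 < G b →
      Φ a ≤ ENNReal.ofReal ((1 + (∫ x, G x) / (∫ x, F x) * F a / G b) / 2) * H ((a + b) / 2)) :
    ∫⁻ x, Φ x ≤ ∫⁻ x, H x := by
  have hR : 0 < R := by
    by_contra hR
    have : ∀ x, F x = 0 := fun x => by
      by_contra h
      have := hFR x h
      simp only [mem_Ioo] at this; linarith
    simp [this] at hA
  set ρ := (∫ x, G x) / (∫ x, F x) with hρ
  have hρ0 : 0 < ρ := div_pos hB hA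
  set P : ℝ → ℝ := fun x => ∫ t in (-R)..x, F t with hP
  set Q : ℝ → ℝ := fun x => ∫ t in (-R)..x, G t with hQ
  have dP : ∀ x, HasStrictDerivAt P (F x) x := fun x =>
    intervalIntegral.integral_hasStrictDerivAt_right (hFc.intervalIntegrable _ _)
      (hFc.stronglyMeasurableAtFilter _ _) hFc.continuousAt
  have dQ : ∀ x, HasStrictDerivAt Q (G x) x := fun x =>
    intervalIntegral.integral_hasStrictDerivAt_right (hGc.intervalIntegrable _ _)
      (hGc.stronglyMeasurableAtFilter _ _) hGc.continuousAt
  have cP : Continuous P := continuous_iff_continuousAt.2 fun x => (dP x).hasDerivAt.continuousAt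
  have cQ : Continuous Q := continuous_iff_continuousAt.2 fun x => (dQ x).hasDerivAt.continuousAt
  have mP : Monotone P := monotone_of_deriv_nonneg (fun x => (dP x).hasDerivAt.differentiableAt)
    (fun x => by rw [(dP x).hasDerivAt.deriv]; exact hF0 x)
  have mQ : Monotone Q := monotone_of_deriv_nonneg (fun x => (dQ x).hasDerivAt.differentiableAt)
    (fun x => by rw [(dQ x).hasDerivAt.deriv]; exact hG0 x)
  have full : ∀ f : ℝ → ℝ, (∀ x, f x ≠ 0 → x ∈ Ioo (-R) R) → ∫ t in (-R)..R, f t = ∫ t, f t := by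
    intro f hf
    rw [intervalIntegral.integral_of_le (by linarith)]
    apply setIntegral_eq_integral_of_forall_compl_eq_zero
    intro x hx
    by_contra h
    exact hx (Ioo_subset_Ioc_self (hf x h))
  have PR : P R = ∫ x, F x := full F hFR
  have QR : Q R = ∫ x, G x := full G hGR
  have Pm : P (-R) = 0 := by simp [hP]
  have Qm : Q (-R) = 0 := by simp [hQ]
  -- strictness
  have sP : ∀ x y, 0 < F x → x < y → P x < P y := by
    intro x y hx hxy
    have : 0 < ∫ t in x..y, F t :=
      intervalIntegral.integral_pos hxy hFc.continuousOn (fun t _ => hF0 t)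
        ⟨x, ⟨le_refl _, hxy.le⟩, hx⟩
    have h2 : P x + ∫ t in x..y, F t = P y :=
      intervalIntegral.integral_add_adjacent_intervals (hFc.intervalIntegrable _ _)
        (hFc.intervalIntegrable _ _)
    linarith
  -- the map
  have exT : ∀ x, ∃ y, x ∈ Ioo (-R) R → y ∈ Icc (-R) R ∧ Q y = ρ * P x := by
    intro x
    by_cases hx : x ∈ Ioo (-R) R
    · have h1 : ρ * P x ∈ Icc (Q (-R)) (Q R) := by
        rw [Qm, QR]
        constructor
        · have := mP hx.1.le
          rw [Pm] at this
          positivity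
        · have := mP hx.2.le
          rw [PR] at this
          calc ρ * P x ≤ ρ * ∫ x, F x := by gcongr
            _ = _ := by rw [hρ]; field_simp
      obtain ⟨y, hy, hy2⟩ := intermediate_value_Icc (by linarith) cQ.continuousOn h1
      exact ⟨y, fun _ => ⟨hy, hy2⟩⟩
    · exact ⟨0, fun h => absurd h hx⟩
  choose T hT using exT
  set Z : Set ℝ := Q '' ({y | G y = 0} ∩ Icc (-R) R) with hZ
  have Zc : IsCompact Z :=
    (isCompact_Icc.inter_left (isClosed_eq hGc continuous_const)).image cQ
  have Z0 : volume Z = 0 := by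
    refine addHaar_image_eq_zero_of_det_fderivWithin_eq_zero volume (f' := fun _ => 0)
      (fun x hx => ?_) (fun x hx => by simp [ContinuousLinearMap.det])
    have := (dQ x).hasDerivAt.hasDerivWithinAt (s := ({y | G y = 0} ∩ Icc (-R) R))
    rw [hx.1] at this
    simpa using this.hasFDerivWithinAt
  set N : Set ℝ := {x | 0 < F x} ∩ (fun x => ρ * P x) ⁻¹' Z with hN
  have mpos : MeasurableSet {x | 0 < F x} := measurableSet_lt measurable_const hFc.measurable
  have Nm : MeasurableSet N :=
    mpos.inter (((continuous_const.mul cP).measurable) Zc.isClosed.measurableSet)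
  have injP : InjOn (fun x => ρ * P x) {x | 0 < F x} := by
    intro x hx y hy hxy
    have hxy' : P x = P y := mul_left_cancel₀ hρ0.ne' hxy
    rcases lt_trichotomy x y with h | h | h
    · have := sP x y hx h; linarith
    · exact h
    · have := sP y x hy h; linarith
  have N0 : volume N = 0 := by
    have h1 := lintegral_image_eq_lintegral_abs_deriv_mul Nm (f := fun x => ρ * P x)
      (f' := fun x => ρ * F x) (fun x _ => ((dP x).hasDerivAt.const_mul ρ).hasDerivWithinAt)
      (injP.mono inter_subset_left) (fun _ => 1)
    have h2 : volume ((fun x => ρ * P x) '' N) = 0 := by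
      refine measure_mono_null ?_ Z0
      rintro _ ⟨x, hx, rfl⟩
      exact hx.2
    simp only [mul_one, lintegral_const, Measure.restrict_apply MeasurableSet.univ, univ_inter,
      one_mul, h2] at h1
    have h3 := (lintegral_eq_zero_iff (by fun_prop)).1 h1.symm
    rw [Filter.EventuallyEq, ae_restrict_iff' Nm] at h3
    have : ∀ᵐ x, x ∉ N := by
      filter_upwards [h3] with x hx hxN
      have := hx hxN
      have h4 : 0 < F x := hxN.1
      simp only [Pi.zero_apply, ENNReal.ofReal_eq_zero] at this
      have h5 : 0 < |ρ * F x| := by positivity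
      linarith
    simpa [ae_iff] using this
  set S : Set ℝ := {x | 0 < F x} \ N with hS
  have Sm : MeasurableSet S := mpos.diff Nm
  have hSI : ∀ x ∈ S, x ∈ Ioo (-R) R := fun x hx => hFR x (ne_of_gt hx.1)
  have hTG : ∀ x ∈ S, 0 < G (T x) := by
    intro x hx
    rcases (hG0 (T x)).lt_or_eq with h | h
    · exact h
    · exfalso
      apply hx.2
      obtain ⟨h1, h2⟩ := hT x (hSI x hx)
      exact ⟨hx.1, ⟨T x, ⟨h.symm, h1⟩, h2⟩⟩
  have monoT : ∀ x ∈ S, ∀ y ∈ S, x < y → T x < T y := by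
    intro x hx y hy hxy
    have h1 := (hT x (hSI x hx)).2
    have h2 := (hT y (hSI y hy)).2
    have h3 := sP x y hx.1 hxy
    by_contra h
    have h4 := mQ (not_lt.1 h)
    rw [h1, h2] at h4
    have := lt_of_mul_lt_mul_left (lt_of_le_of_lt h4 (mul_lt_mul_of_pos_left h3 hρ0)) hρ0.le
    linarith
  have sQ : ∀ x y, 0 < G x → x < y → Q x < Q y := by
    intro x y hx hxy
    have : 0 < ∫ t in x..y, G t :=
      intervalIntegral.integral_pos hxy hGc.continuousOn (fun t _ => hG0 t)
        ⟨x, ⟨le_refl _, hxy.le⟩, hx⟩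
    have h2 : Q x + ∫ t in x..y, G t = Q y :=
      intervalIntegral.integral_add_adjacent_intervals (hGc.intervalIntegrable _ _)
        (hGc.intervalIntegrable _ _)
    linarith
  have sQ' : ∀ x y, 0 < G y → x < y → Q x < Q y := by
    intro x y hx hxy
    have : 0 < ∫ t in x..y, G t :=
      intervalIntegral.integral_pos hxy hGc.continuousOn (fun t _ => hG0 t)
        ⟨y, ⟨hxy.le, le_refl _⟩, hx⟩
    have h2 : Q x + ∫ t in x..y, G t = Q y :=
      intervalIntegral.integral_add_adjacent_intervals (hGc.intervalIntegrable _ _)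
        (hGc.intervalIntegrable _ _)
    linarith
  have dT : ∀ x ∈ S, HasDerivWithinAt T (ρ * F x / G (T x)) S x := by
    intro x hx
    have hg := hTG x hx
    have h1 := (hT x (hSI x hx)).2
    have contT : Filter.Tendsto T (nhdsWithin x S) (nhds (T x)) := by
      rw [tendsto_order]
      have cc : Continuous (fun x => ρ * P x) := continuous_const.mul cP
      constructor
      · intro a ha
        have h2 : Q a < ρ * P x := by rw [← h1]; exact sQ' _ _ hg ha
        have h3 := (cc.continuousAt (x := x)).eventually (lt_mem_nhds h2)
        filter_upwards [nhdsWithin_le_nhds h3, self_mem_nhdsWithin] with z hz hzS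
        rw [← (hT z (hSI z hzS)).2] at hz
        by_contra h
        exact absurd (mQ (not_lt.1 h)) (not_le.2 hz)
      · intro a ha
        have h2 : ρ * P x < Q a := by rw [← h1]; exact sQ _ _ hg ha
        have h3 := (cc.continuousAt (x := x)).eventually (gt_mem_nhds h2)
        filter_upwards [nhdsWithin_le_nhds h3, self_mem_nhdsWithin] with z hz hzS
        rw [← (hT z (hSI z hzS)).2] at hz
        by_contra h
        exact absurd (mQ (not_lt.1 h)) (not_le.2 hz)
    have hq := dQ (T x)
    have hinv := hq.to_localInverse hg.ne'
    rw [h1] at hinv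
    have hcomp := hinv.hasDerivAt.comp x ((dP x).hasDerivAt.const_mul ρ)
    have hle := (hq.hasStrictFDerivAt_equiv hg.ne').eventually_left_inverse
    have heq : T =ᶠ[nhdsWithin x S] (hq.localInverse Q _ _ hg.ne') ∘ fun x => ρ * P x := by
      filter_upwards [contT.eventually hle, self_mem_nhdsWithin] with z hz hzS
      rw [(hT z (hSI z hzS)).2] at hz
      exact hz.symm
    have heqx : T x = ((hq.localInverse Q _ _ hg.ne') ∘ fun x => ρ * P x) x :=
      heq.self_of_nhdsWithin hx
    have := hcomp.hasDerivWithinAt.congr_of_eventuallyEq heq heqx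
    rw [div_eq_inv_mul]
    exact this
  have key := lintegral_image_eq_lintegral_abs_deriv_mul Sm (f := fun x => (x + T x) / 2)
      (f' := fun x => (1 + ρ * F x / G (T x)) / 2)
      (fun x hx => ((hasDerivWithinAt_id x S).add (dT x hx)).div_const 2)
      (by
        intro x hx y hy hxy
        simp only at hxy
        rcases lt_trichotomy x y with h | h | h
        · have := monoT x hx y hy h; linarith
        · exact h
        · have := monoT y hy x hx h; linarith) H
  calc ∫⁻ x, Φ x = ∫⁻ x in S, Φ x := by
        rw [← lintegral_indicator Sm]
        apply lintegral_congr_ae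
        have : ∀ᵐ x, x ∉ N := by simpa [ae_iff] using N0
        filter_upwards [this] with x hx
        by_cases hxS : x ∈ S
        · simp [hxS]
        · rw [indicator_of_notMem hxS]
          apply h0
          by_contra h
          exact hxS ⟨lt_of_le_of_ne (hF0 x) (Ne.symm h), hx⟩
    _ ≤ ∫⁻ x in S, ENNReal.ofReal |(1 + ρ * F x / G (T x)) / 2| * H ((x + T x) / 2) := by
        apply setLIntegral_mono' Sm
        intro x hx
        have h1 := hTG x hx
        have h2 : 0 < F x := hx.1
        rw [abs_of_nonneg (by positivity)]
        exact hΦ x (T x) h2 h1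
    _ = _ := key.symm
    _ ≤ _ := setLIntegral_le_lintegral _ _

theorem aux_lint_cons (k : ℕ) (φ : (Fin (k+1) → ℝ) → ℝ≥0∞) (hφ : Measurable φ) :
    ∫⁻ z, φ z = ∫⁻ a : ℝ, ∫⁻ x : Fin k → ℝ, φ (Fin.cons a x) := by
  have hm := (volume_preserving_piFinSuccAbove (fun _ : Fin (k+1) => ℝ) 0).symm
  rw [← hm.lintegral_comp hφ]
  rw [Measure.volume_eq_prod, lintegral_prod (fun q => φ ((MeasurableEquiv.piFinSuccAbove (fun _ : Fin (k+1) => ℝ) 0).symm q))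
    (hφ.comp hm.measurable).aemeasurable]
  simp [MeasurableEquiv.piFinSuccAbove, Fin.consEquiv, Fin.insertNthEquiv]

theorem aux_compact (k : ℕ) (f : (Fin k → ℝ) → ℝ) (R : ℝ)
    (hR : ∀ x, f x ≠ 0 → ∀ i, x i ∈ Ioo (-R) R) : HasCompactSupport f := by
  apply HasCompactSupport.intro (K := Set.pi univ (fun _ => Icc (-R) R))
    (isCompact_univ_pi fun _ => isCompact_Icc)
  intro x hx
  by_contra h
  exact hx (fun i _ => Ioo_subset_Icc_self (hR x h i))

theorem aux_cons_cont (k : ℕ) : Continuous (fun q : ℝ × (Fin k → ℝ) => (Fin.cons q.1 q.2 : Fin (k+1) → ℝ)) := by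
  refine continuous_pi fun i => ?_
  refine Fin.cases ?_ (fun j => ?_) i
  · simpa using continuous_fst
  · simp only [Fin.cons_succ]; fun_prop

theorem aux_int_cons (k : ℕ) (f : (Fin (k+1) → ℝ) → ℝ) (hf : Continuous f) (hf0 : ∀ x, 0 ≤ f x) (R : ℝ)
    (hR : ∀ x, f x ≠ 0 → ∀ i, x i ∈ Ioo (-R) R) :
    ∫ z, f z = ∫ a : ℝ, ∫ x : Fin k → ℝ, f (Fin.cons a x) := by
  have hi : Integrable f := hf.integrable_of_hasCompactSupport (aux_compact _ f R hR)
  have hm := (volume_preserving_piFinSuccAbove (fun _ : Fin (k+1) => ℝ) 0).symm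
  rw [← hm.integral_comp (MeasurableEquiv.measurableEmbedding _)]
  rw [Measure.volume_eq_prod, integral_prod (fun q => f ((MeasurableEquiv.piFinSuccAbove (fun _ : Fin (k+1) => ℝ) 0).symm q))
    ((hm.integrable_comp_emb (MeasurableEquiv.measurableEmbedding _)).2 hi)]
  simp [MeasurableEquiv.piFinSuccAbove, Fin.consEquiv, Fin.insertNthEquiv]

theorem aux_marg_cont (k : ℕ) (f : (Fin (k+1) → ℝ) → ℝ) (hf : Continuous f) (R : ℝ)
    (hR : ∀ x, f x ≠ 0 → ∀ i, x i ∈ Ioo (-R) R) :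
    Continuous (fun a : ℝ => ∫ x : Fin k → ℝ, f (Fin.cons a x)) := by
  have hc : IsCompact (Set.pi univ (fun _ : Fin k => Icc (-R) R)) :=
    isCompact_univ_pi fun _ => isCompact_Icc
  have := continuous_parametric_integral_of_continuous (μ := (volume : Measure (Fin k → ℝ)))
    (f := fun a x => f (Fin.cons a x)) (hf.comp (aux_cons_cont k)) hc
  convert this using 2 with a
  symm
  apply setIntegral_eq_integral_of_forall_compl_eq_zero
  intro x hx
  by_contra h
  refine hx (fun i _ => Ioo_subset_Icc_self ?_)
  simpa using hR _ h i.succ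

theorem aux_PL (k : ℕ) : ∀ (f g W θ c : (Fin k → ℝ) → ℝ) (h : (Fin k → ℝ) → ℝ≥0∞) (R : ℝ),
    Continuous f → Continuous g → Measurable W → Measurable θ → Measurable c → Measurable h →
    (∀ x, 0 ≤ f x) → (∀ x, 0 ≤ g x) → (∀ x, 0 ≤ W x) → (∀ x, 0 < c x) →
    (∀ x, f x ≠ 0 → ∀ i, x i ∈ Ioo (-R) R) → (∀ x, g x ≠ 0 → ∀ i, x i ∈ Ioo (-R) R) →
    (∀ x, f x = 0 → W x = 0) →
    0 < ∫ x, f x → 0 < ∫ x, g x →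
    (∀ x, ∀ l : ℝ, 0 < l → c x * l ^ θ x ≤ (1 + l) / 2) →
    (∀ x y, 0 < f x → 0 < g y →
      ENNReal.ofReal (W x * (g y / f x) ^ θ x) ≤ h ((1/2 : ℝ) • (x + y))) →
    ∫⁻ x, ENNReal.ofReal (W x * c x ^ k * ((∫ x, g x) / (∫ x, f x)) ^ θ x) ≤ ∫⁻ x, h x := by
  induction k with
  | zero =>
    intro f g W θ c h R hf hg hW hθ hc hh hf0 hg0 hW0 hc0 hfR hgR hfW hA hB hcl H
    have hv : (volume : Measure (Fin 0 → ℝ)) = Measure.dirac (fun a => isEmptyElim a) := by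
      rw [volume_pi]; exact Measure.pi_of_empty _ _
    have hd : ∀ F : (Fin 0 → ℝ) → ℝ≥0∞, ∫⁻ x, F x = F (fun a => isEmptyElim a) := by
      intro F; rw [hv, lintegral_dirac]
    have hd' : ∀ F : (Fin 0 → ℝ) → ℝ, ∫ x, F x = F (fun a => isEmptyElim a) := by
      intro F; rw [hv, integral_dirac]
    rw [hd, hd, hd', hd'] at *
    have := H _ _ hA hB
    simp only [pow_zero, mul_one]
    refine this.trans (le_of_eq ?_)
    congr 1
    exact Subsingleton.elim _ _
  | succ k ih =>
    intro f g W θ c h R hf hg hW hθ hc hh hf0 hg0 hW0 hc0 hfR hgR hfW hA hB hcl H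
    have cc := aux_cons_cont k
    have cs : ∀ a : ℝ, Continuous (fun x : Fin k → ℝ => (Fin.cons a x : Fin (k+1) → ℝ)) :=
      fun a => cc.comp (by fun_prop : Continuous fun x : Fin k → ℝ => (a, x))
    set F : ℝ → ℝ := fun a => ∫ x : Fin k → ℝ, f (Fin.cons a x) with hF
    set G : ℝ → ℝ := fun a => ∫ x : Fin k → ℝ, g (Fin.cons a x) with hG
    have hFi : ∫ x, f x = ∫ a, F a := aux_int_cons k f hf hf0 R hfR
    have hGi : ∫ x, g x = ∫ a, G a := aux_int_cons k g hg hg0 R hgR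
    rw [hFi] at hA ⊢
    rw [hGi] at hB ⊢
    have hρ0 : 0 < (∫ a, G a) / ∫ a, F a := div_pos hB hA
    set ρ := (∫ a, G a) / ∫ a, F a with hρ
    have hmR : ∀ u : (Fin (k+1) → ℝ) → ℝ, (∀ x, u x ≠ 0 → ∀ i, x i ∈ Ioo (-R) R) →
        ∀ a, (∫ x : Fin k → ℝ, u (Fin.cons a x)) ≠ 0 → a ∈ Ioo (-R) R := by
      intro u hu a ha
      by_contra hh
      apply ha
      have : ∀ x : Fin k → ℝ, u (Fin.cons a x) = 0 := by
        intro x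
        by_contra h2
        exact hh (by simpa using hu _ h2 0)
      simp [this]
    have hsR : ∀ u : (Fin (k+1) → ℝ) → ℝ, (∀ x, u x ≠ 0 → ∀ i, x i ∈ Ioo (-R) R) →
        ∀ a, ∀ x : Fin k → ℝ, u (Fin.cons a x) ≠ 0 → ∀ i, x i ∈ Ioo (-R) R := by
      intro u hu a x hx i
      simpa using hu _ hx i.succ
    have hF0 : ∀ a, 0 ≤ F a := fun a => integral_nonneg fun x => hf0 _
    have hG0 : ∀ a, 0 ≤ G a := fun a => integral_nonneg fun x => hg0 _
    have hsec : ∀ a, F a = 0 → ∀ x : Fin k → ℝ, f (Fin.cons a x) = 0 := by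
      intro a ha x
      by_contra hx
      have := (hf.comp (cs a)).integral_pos_of_hasCompactSupport_nonneg_nonzero
        (μ := volume) (x := x) (aux_compact k _ R (hsR f hfR a)) (fun x => hf0 _) hx
      exact absurd ha (ne_of_gt this)
    rw [aux_lint_cons k h hh, aux_lint_cons k _ (by fun_prop)]
    refine aux_transport F G (aux_marg_cont k f hf R hfR) (aux_marg_cont k g hg R hgR) hF0 hG0 R
      (hmR f hfR) (hmR g hgR) hA hB _ _ ?_ ?_
    · intro a ha
      have : ∀ x : Fin k → ℝ, W (Fin.cons a x) = 0 := fun x => hfW _ (hsec a ha x)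
      simp [this]
    · intro a b ha hb
      have key := ih (fun x => f (Fin.cons a x)) (fun x => g (Fin.cons b x))
        (fun x => W (Fin.cons a x)) (fun x => θ (Fin.cons a x)) (fun x => c (Fin.cons a x))
        (fun x => h (Fin.cons ((a + b) / 2) x)) R (hf.comp (cs a)) (hg.comp (cs b))
        (hW.comp (cs a).measurable) (hθ.comp (cs a).measurable) (hc.comp (cs a).measurable)
        (hh.comp (cs _).measurable) (fun x => hf0 _) (fun x => hg0 _) (fun x => hW0 _)
        (fun x => hc0 _) (hsR f hfR a) (hsR g hgR b) (fun x => hfW _) ha hb (fun x => hcl _)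
        (by
          intro x y hx hy
          refine (H _ _ hx hy).trans (le_of_eq ?_)
          congr 1
          ext i
          refine Fin.cases ?_ (fun j => ?_) i
          · simp; ring
          · simp; ring)
      refine le_trans ?_ (mul_le_mul_right key _)
      rw [← lintegral_const_mul _ (by
        have := hW.comp (cs a).measurable
        have := hθ.comp (cs a).measurable
        have := hc.comp (cs a).measurable
        fun_prop)]
      apply lintegral_mono
      intro x
      simp only
      rw [← ENNReal.ofReal_mul (by positivity)]
      apply ENNReal.ofReal_le_ofReal
      have h1 := hcl (Fin.cons a x) (ρ * F a / G b) (by positivity)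
      have h2 : 0 < c (Fin.cons a x) := hc0 _
      have h3 := hW0 (Fin.cons a x)
      have e1 : ρ ^ θ (Fin.cons a x) = (ρ * F a / G b) ^ θ (Fin.cons a x) * (G b / F a) ^ θ (Fin.cons a x) := by
        rw [← Real.mul_rpow (by positivity) (by positivity)]
        congr 1
        field_simp
      rw [e1, pow_succ]
      calc _ = (c (Fin.cons a x) * (ρ * F a / G b) ^ θ (Fin.cons a x)) * (W (Fin.cons a x) * c (Fin.cons a x) ^ k * (G b / F a) ^ θ (Fin.cons a x)) := by ring
        _ ≤ _ := by gcongr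


theorem aux_loc (f f' : ℝ → ℝ) (d : ℝ) (hd : 0 < d)
    (h1 : ∀ᶠ x in nhds (0:ℝ), HasDerivAt f (f' x) x) (h2 : HasDerivAt f' d 0) (h3 : f' 0 = 0) :
    ∀ᶠ x in nhds (0:ℝ), f 0 ≤ f x := by
  have e : deriv f =ᶠ[nhds 0] f' := h1.mono fun x hx => hx.deriv
  apply isLocalMin_of_deriv_deriv_pos
  · rw [e.deriv_eq, h2.deriv]; exact hd
  · rw [e.self_of_nhds, h3]
  · exact h1.self_of_nhds.continuousAt

theorem aux_log (κ : ℝ) (hκ : 0 < κ) : ∀ᶠ σ in nhds (0:ℝ),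
    ((1 + σ) * log (1 + σ) + (1 - σ) * log (1 - σ)) / 2 ≤ (1 + κ) * σ ^ 2 / 2 := by
  have h := aux_loc (fun σ => (1 + κ) * σ ^ 2 / 2 - ((1 + σ) * log (1 + σ) + (1 - σ) * log (1 - σ)) / 2)
    (fun σ => (1 + κ) * σ - (log (1 + σ) - log (1 - σ)) / 2) κ hκ ?_ ?_ (by simp)
  · filter_upwards [h] with σ hσ
    norm_num at hσ
    linarith
  · have : ∀ᶠ σ in nhds (0:ℝ), σ ∈ Ioo (-1:ℝ) 1 := Ioo_mem_nhds (by norm_num) (by norm_num)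
    filter_upwards [this] with σ hσ
    have h1 : 1 + σ ≠ 0 := by linarith [hσ.1]
    have h2 : 1 - σ ≠ 0 := by linarith [hσ.2]
    have a1 : HasDerivAt (fun σ : ℝ => 1 + σ) 1 σ := (hasDerivAt_id σ).const_add 1
    have a2 : HasDerivAt (fun σ : ℝ => 1 - σ) (-1) σ := (hasDerivAt_id σ).const_sub 1
    have := (((hasDerivAt_pow 2 σ).const_mul (1 + κ)).div_const 2).sub
      (((a1.mul (a1.log h1)).add (a2.mul (a2.log h2))).div_const 2)
    refine this.congr_deriv ?_
    field_simp
    push_cast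
    ring
  · have a1 : HasDerivAt (fun σ : ℝ => 1 + σ) 1 0 := (hasDerivAt_id 0).const_add 1
    have a2 : HasDerivAt (fun σ : ℝ => 1 - σ) (-1) 0 := (hasDerivAt_id 0).const_sub 1
    have := ((hasDerivAt_id (0:ℝ)).const_mul (1 + κ)).sub
      (((a1.log (by norm_num)).sub (a2.log (by norm_num))).div_const 2)
    refine this.congr_deriv ?_
    norm_num

theorem aux_C (κ : ℝ) (hκ : 0 < κ) : ∀ᶠ s in nhds (0:ℝ), ∀ l : ℝ, 0 < l →
    exp (-(2 * (1 + κ) * s ^ 2)) * l ^ (1 / 2 + s) ≤ (1 + l) / 2 := by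
  have ht : Filter.Tendsto (fun s : ℝ => 2 * s) (nhds 0) (nhds 0) := by
    have : Continuous (fun s : ℝ => 2 * s) := by fun_prop
    simpa using this.tendsto 0
  have : ∀ᶠ σ in nhds (0:ℝ), σ ∈ Ioo (-1:ℝ) 1 := Ioo_mem_nhds (by norm_num) (by norm_num)
  filter_upwards [ht.eventually (aux_log κ hκ), ht.eventually this] with s hs hs1 l hl
  have h1 : 0 < 1 + 2 * s := by linarith [hs1.1]
  have h2 : 0 < 1 - 2 * s := by linarith [hs1.2]
  have key := Real.geom_mean_le_arith_mean2_weighted (w₁ := 1/2 - s) (w₂ := 1/2 + s)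
    (p₁ := 1 / (1 - 2 * s)) (p₂ := l / (1 + 2 * s)) (by linarith) (by linarith) (by positivity)
    (by positivity) (by ring)
  have e1 : (1/2 - s) * (1 / (1 - 2 * s)) + (1/2 + s) * (l / (1 + 2 * s)) = (1 + l) / 2 := by
    field_simp
  rw [e1] at key
  refine le_trans ?_ key
  rw [Real.div_rpow hl.le h1.le, Real.div_rpow zero_le_one h2.le, Real.one_rpow]
  have e2 : (1 - 2 * s) ^ (1 / 2 - s) = exp ((1 - 2 * s) * log (1 - 2 * s) / 2) := by
    rw [Real.rpow_def_of_pos h2]; congr 1; ring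
  have e3 : (1 + 2 * s) ^ (1 / 2 + s) = exp ((1 + 2 * s) * log (1 + 2 * s) / 2) := by
    rw [Real.rpow_def_of_pos h1]; congr 1; ring
  rw [e2, e3]
  have e4 : 1 / exp ((1 - 2 * s) * log (1 - 2 * s) / 2) *
      (l ^ (1 / 2 + s) / exp ((1 + 2 * s) * log (1 + 2 * s) / 2)) =
      exp (-((1 - 2 * s) * log (1 - 2 * s) / 2 + (1 + 2 * s) * log (1 + 2 * s) / 2)) * l ^ (1 / 2 + s) := by
    rw [Real.exp_neg, Real.exp_add]; field_simp
  rw [e4]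
  gcongr
  linarith

theorem aux_u (p κ : ℝ) (hp : 1 < p) (hκ : 0 < κ) : ∀ᶠ s in nhds (0:ℝ), ∃ u : ℝ, 0 < u ∧ u < 1 ∧
    1 / 2 * (2 * u) ^ (1 - p) ≤ 1 / 2 + s ∧
    1 / 2 * (2 * (1 - u)) ^ (1 - p) ≤ 1 / 2 - s + 2 * (1 + κ) * (p / (p - 1)) * s ^ 2 := by
  have hp1 : 0 < p - 1 := by linarith
  set r := 1 / (p - 1) with hr
  have hr0 : 0 < r := by positivity
  have hc1 : Filter.Tendsto (fun σ : ℝ => (1 + σ) ^ (-r)) (nhds 0) (nhds 1) := by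
    have : ContinuousAt (fun σ : ℝ => (1 + σ) ^ (-r)) 0 :=
      ContinuousAt.rpow_const (by fun_prop) (by norm_num)
    have h := this.tendsto
    simpa using h
  have ev1 : ∀ᶠ σ in nhds (0:ℝ), (1 + σ) ^ (-r) < 2 := hc1.eventually (gt_mem_nhds (by norm_num))
  have ev2 : ∀ᶠ σ in nhds (0:ℝ), σ ∈ Ioo (-1:ℝ) 1 := Ioo_mem_nhds (by norm_num) (by norm_num)
  have D : ∀ σ : ℝ, 0 < 1 + σ → HasDerivAt (fun σ : ℝ => 2 - (1 + σ) ^ (-r)) (r * (1 + σ) ^ (-r - 1)) σ := by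
    intro σ h
    have a1 : HasDerivAt (fun σ : ℝ => 1 + σ) 1 σ := (hasDerivAt_id σ).const_add 1
    refine ((a1.rpow_const (p := -r) (Or.inl h.ne')).const_sub 2).congr_deriv ?_
    ring
  have h := aux_loc
    (fun σ => 1 - σ + (1 + κ) * (1 + r) * σ ^ 2 - (2 - (1 + σ) ^ (-r)) ^ (1 - p))
    (fun σ => -1 + (1 + κ) * (1 + r) * (2 * σ) + (2 - (1 + σ) ^ (-r)) ^ (- p) * (1 + σ) ^ (-r - 1))
    (2 * κ * (1 + r)) (by positivity) ?_ ?_ (by norm_num)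
  · have ht : Filter.Tendsto (fun s : ℝ => 2 * s) (nhds 0) (nhds 0) := by
      have : Continuous (fun s : ℝ => 2 * s) := by fun_prop
      simpa using this.tendsto 0
    filter_upwards [ht.eventually h, ht.eventually ev1, ht.eventually ev2] with s hs h1 h2
    have h3 : 0 < 1 + 2 * s := by linarith [h2.1]
    have h4 : 0 < (1 + 2 * s) ^ (-r) := by positivity
    refine ⟨(1 + 2 * s) ^ (-r) / 2, by positivity, by linarith, ?_, ?_⟩
    · rw [mul_div_cancel₀ _ (by norm_num : (2:ℝ) ≠ 0), ← Real.rpow_mul h3.le]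
      have : -r * (1 - p) = 1 := by rw [hr]; field_simp; ring
      rw [this, Real.rpow_one]; linarith
    · have e : 2 * (1 - (1 + 2 * s) ^ (-r) / 2) = 2 - (1 + 2 * s) ^ (-r) := by ring
      rw [e]
      norm_num at hs
      have e2 : p / (p - 1) = 1 + r := by rw [hr]; field_simp; ring
      rw [e2]
      nlinarith
  · filter_upwards [ev1, ev2] with σ h1 h2
    have h3 : 0 < 1 + σ := by linarith [h2.1]
    have a1 : HasDerivAt (fun σ : ℝ => 1 - σ) (-1) σ := (hasDerivAt_id σ).const_sub 1
    have := (a1.add ((hasDerivAt_pow 2 σ).const_mul ((1 + κ) * (1 + r)))).sub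
      ((D σ h3).rpow_const (p := 1 - p) (Or.inl (by linarith)))
    refine this.congr_deriv ?_
    have e : 1 - p - 1 = -p := by ring
    have e2 : r * (1 - p) = -1 := by rw [hr]; field_simp; ring
    rw [e]
    have e3 : r * (1 + σ) ^ (-r - 1) * (1 - p) = - (1 + σ) ^ (-r - 1) := by
      linear_combination (1 + σ) ^ (-r - 1) * e2
    rw [e3]
    push_cast
    ring
  · have a1 : HasDerivAt (fun σ : ℝ => 1 + σ) 1 0 := (hasDerivAt_id 0).const_add 1
    have := (((hasDerivAt_id (0:ℝ)).const_mul 2).const_mul ((1 + κ) * (1 + r))).const_add (-1) |>.add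
      (((D 0 (by norm_num)).rpow_const (p := -p) (Or.inl (by norm_num))).mul
        (a1.rpow_const (p := -r - 1) (Or.inl (by norm_num))))
    refine this.congr_deriv ?_
    norm_num
    have e2 : r * p = 1 + r := by rw [hr]; field_simp; ring
    linear_combination -e2

lemma aux_alpha (n : ℕ) (hn : 0 < n) (p : ℝ) (hp : 1 < p) :
    (1 / (n : ℝ)) * Real.exp ((p - 1) * n / p) * ((p - 1) * n / p) ^ ((n : ℝ) / p) *
      uiGamma (1 - (n : ℝ) / p) ((p - 1) * n / p)
    = ∫ s in Ioi (0:ℝ), Real.exp (-(s * n)) * (1 + s * (p / (p - 1))) ^ (-((n:ℝ) / p)) := by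
  have hn' : (0:ℝ) < n := by exact_mod_cast hn
  have hp1 : 0 < p - 1 := by linarith
  have hp0 : 0 < p := by linarith
  set a : ℝ := (p - 1) * n / p with ha
  have ha0 : 0 < a := by positivity
  unfold uiGamma
  have e1 : ∫ t in Ioi a, t ^ ((1 - (n:ℝ) / p) - 1) * Real.exp (-t)
      = ∫ t in Ioi 0, (t + a) ^ ((1 - (n:ℝ) / p) - 1) * Real.exp (-(t + a)) := by
    have h := (measurePreserving_add_right (volume : Measure ℝ) a).setIntegral_preimage_emb
      (MeasurableEquiv.addRight a).measurableEmbedding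
      (fun t => t ^ ((1 - (n:ℝ) / p) - 1) * Real.exp (-t)) (Ioi a)
    rw [← h]
    congr 2
    ext x; simp
  have e2 := integral_comp_mul_left_Ioi
    (fun t => (t + a) ^ ((1 - (n:ℝ) / p) - 1) * Real.exp (-(t + a))) 0 hn'
  rw [mul_zero, smul_eq_mul] at e2
  have e3 : ∫ t in Ioi (0:ℝ), (t + a) ^ ((1 - (n:ℝ) / p) - 1) * Real.exp (-(t + a))
      = n * ∫ s in Ioi (0:ℝ), (n * s + a) ^ ((1 - (n:ℝ) / p) - 1) * Real.exp (-(n * s + a)) := by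
    rw [e2]; field_simp
  rw [e1, e3, ← integral_const_mul, ← integral_const_mul]
  apply setIntegral_congr_fun measurableSet_Ioi
  intro s hs
  have hs' : 0 < s := hs
  have : n * s + a = a * (1 + s * (p / (p - 1))) := by
    rw [ha]; field_simp; ring
  have h4 : Real.exp (-(n * s + a)) = Real.exp (-(s*n)) * Real.exp (-a) := by
    rw [← Real.exp_add]; congr 1; ring
  simp only
  rw [h4, this, Real.mul_rpow ha0.le (by positivity),
    show (1 - (n:ℝ) / p) - 1 = -(n / p) by ring, Real.rpow_neg ha0.le, Real.exp_neg a]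
  have := Real.rpow_pos_of_pos ha0 (n/p)
  field_simp

lemma aux_alpha_int (n : ℕ) (hn : 0 < n) (p : ℝ) (hp : 1 < p) :
    IntegrableOn (fun s : ℝ => Real.exp (-(s * n)) * (1 + s * (p / (p - 1))) ^ (-((n:ℝ) / p)))
      (Ioi (0:ℝ)) := by
  have hn' : (0:ℝ) < n := by exact_mod_cast hn
  have hp1 : 0 < p - 1 := by linarith
  have hp0 : 0 < p := by linarith
  have h : IntegrableOn (fun s : ℝ => Real.exp (-(n:ℝ) * s)) (Ioi (0:ℝ)) := integrableOn_exp_mul_Ioi (by linarith) 0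
  refine Integrable.mono' h (by fun_prop) ?_
  filter_upwards [ae_restrict_mem measurableSet_Ioi] with s hs
  have hs' : 0 < s := hs
  have h1 : 1 ≤ 1 + s * (p / (p - 1)) := by
    have : 0 < s * (p / (p - 1)) := by positivity
    linarith
  rw [Real.norm_of_nonneg (by positivity)]
  calc _ ≤ Real.exp (-(s * n)) * 1 := by
        gcongr
        exact Real.rpow_le_one_of_one_le_of_nonpos h1 (by simp; positivity)
    _ = _ := by rw [mul_one]; congr 1; ring

lemma aux_alpha_pos (n : ℕ) (hn : 0 < n) (p : ℝ) (hp : 1 < p) :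
    0 < ∫ s in Ioi (0:ℝ), Real.exp (-(s * n)) * (1 + s * (p / (p - 1))) ^ (-((n:ℝ) / p)) := by
  have hp1 : 0 < p - 1 := by linarith
  have hp0 : 0 < p := by linarith
  have hpos : ∀ s ∈ Ioi (0:ℝ), 0 < Real.exp (-(s * n)) * (1 + s * (p / (p - 1))) ^ (-((n:ℝ) / p)) := by
    intro s hs
    have hs' : 0 < s := hs
    positivity
  rw [setIntegral_pos_iff_support_of_nonneg_ae _ (aux_alpha_int n hn p hp)]
  · refine lt_of_lt_of_le ?_ (measure_mono (s := Ioi 0) (fun s hs => ⟨(hpos s hs).ne', hs⟩))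
    simp
  · filter_upwards [ae_restrict_mem measurableSet_Ioi] with s hs
    exact (hpos s hs).le

lemma aux_D2 (n : ℕ) (hn : 0 < n) (p : ℝ) (hp : 1 < p)
    (V : EuclideanSpace ℝ (Fin n) → ℝ)
    (hVnn : ∀ x, 0 ≤ V x) (hVc : Continuous V)
    (hVhom : ∀ (x : EuclideanSpace ℝ (Fin n)) (c : ℝ), 0 < c → V (c • x) = c ^ p * V x)
    (A : Set (EuclideanSpace ℝ (Fin n))) (hA : MeasurableSet A)
    (hs : ∀ x, ∀ t : ℝ, 1 ≤ t → t • x ∈ A → x ∈ A) :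
    ENNReal.ofReal (∫ s in Ioi (0:ℝ), Real.exp (-(s * n)) * (1 + s * (p / (p - 1))) ^ (-((n:ℝ) / p)))
      * ∫⁻ x in A, ENNReal.ofReal (Real.exp (-V x)) ≤
    ∫⁻ x in A, ENNReal.ofReal (Real.exp (-V x) / (n + p / (p - 1) * V x)) := by
  have hn' : (0:ℝ) < n := by exact_mod_cast hn
  have hp1 : 0 < p - 1 := by linarith
  have hp0 : 0 < p := by linarith
  set c₀ := p / (p - 1) with hc₀
  have hc0 : 0 < c₀ := by positivity
  have hw : ∀ x, 0 < n + c₀ * V x := fun x => by have := hVnn x; positivity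
  have h1 : ∀ x, ENNReal.ofReal (Real.exp (-V x) / (n + c₀ * V x))
      = ∫⁻ s in Ioi (0:ℝ), ENNReal.ofReal (Real.exp (-(s * n)) * Real.exp (-((1 + s * c₀) * V x))) := by
    intro x
    have hi : IntegrableOn (fun s : ℝ => Real.exp (-(n + c₀ * V x) * s)) (Ioi (0:ℝ)) :=
      integrableOn_exp_mul_Ioi (by linarith [hw x]) 0
    have e : ∀ s : ℝ, Real.exp (-(s * n)) * Real.exp (-((1 + s * c₀) * V x))
        = Real.exp (-V x) * Real.exp (-(n + c₀ * V x) * s) := by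
      intro s; rw [← Real.exp_add, ← Real.exp_add]; congr 1; ring
    simp_rw [e]
    rw [← ofReal_integral_eq_lintegral_ofReal (hi.const_mul _)
      (Filter.Eventually.of_forall fun s => by positivity), integral_const_mul,
      integral_exp_mul_Ioi (by linarith [hw x])]
    congr 1
    have := hw x
    rw [mul_zero, Real.exp_zero, neg_div_neg_eq, mul_one_div]
  simp_rw [h1]
  rw [lintegral_lintegral_swap (by fun_prop)]
  rw [ofReal_integral_eq_lintegral_ofReal (aux_alpha_int n hn p hp) (by
    filter_upwards [ae_restrict_mem measurableSet_Ioi] with s hs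
    have hs' : 0 < s := hs
    positivity)]
  rw [← lintegral_mul_const _ (by fun_prop)]
  apply lintegral_mono_ae
  filter_upwards [ae_restrict_mem measurableSet_Ioi] with s hs'
  have hs0 : 0 < s := hs'
  set q : ℝ := 1 + s * c₀ with hq
  have hq1 : 1 ≤ q := by have : 0 < s * c₀ := by positivity
                         linarith
  have hq0 : 0 < q := by linarith
  set t : ℝ := q ^ (1 / p) with ht
  have ht0 : 0 < t := by positivity
  have ht1 : 1 ≤ t := Real.one_le_rpow hq1 (by positivity)
  have hVt : ∀ x, q * V x = V (t • x) := by
    intro x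
    rw [hVhom x t ht0, ht, ← Real.rpow_mul hq0.le]
    simp [hp0.ne']
  have key : ENNReal.ofReal (q ^ (-((n:ℝ)/p))) * ∫⁻ x in A, ENNReal.ofReal (Real.exp (-V x))
      ≤ ∫⁻ x in A, ENNReal.ofReal (Real.exp (-V (t • x))) := by
    have hm : Measurable (fun x => A.indicator (fun x => ENNReal.ofReal (Real.exp (-V x))) x) :=
      Measurable.indicator (by fun_prop) hA
    have hmap := Measure.map_addHaar_smul (volume : Measure (EuclideanSpace ℝ (Fin n))) ht0.ne'
    have h2 := lintegral_map (μ := (volume : Measure (EuclideanSpace ℝ (Fin n)))) hm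
      (measurable_const_smul t)
    rw [hmap, lintegral_smul_measure] at h2
    have h3 : ENNReal.ofReal |(t ^ Module.finrank ℝ (EuclideanSpace ℝ (Fin n)))⁻¹|
        = ENNReal.ofReal (q ^ (-((n:ℝ)/p))) := by
      congr 1
      rw [abs_of_pos (by positivity), finrank_euclideanSpace, Fintype.card_fin, ht,
        ← Real.rpow_natCast, ← Real.rpow_mul hq0.le, Real.rpow_neg hq0.le]
      congr 2; ring
    rw [h3, lintegral_indicator hA, smul_eq_mul] at h2
    rw [h2, ← lintegral_indicator hA]
    apply lintegral_mono
    intro x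
    by_cases hx : t • x ∈ A
    · simp [hx, hs x t ht1 hx]
    · simp [hx]
  have e5 : ∀ x, ENNReal.ofReal (Real.exp (-(s * n)) * Real.exp (-(q * V x)))
      = ENNReal.ofReal (Real.exp (-(s * n))) * ENNReal.ofReal (Real.exp (-V (t • x))) := by
    intro x
    rw [hVt, ENNReal.ofReal_mul (by positivity)]
  simp_rw [e5]
  rw [lintegral_const_mul _ (by fun_prop), ENNReal.ofReal_mul (by positivity), mul_assoc]
  gcongr

lemma aux_PLE (k : ℕ) (f g W θ c : EuclideanSpace ℝ (Fin k) → ℝ)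
    (h : EuclideanSpace ℝ (Fin k) → ℝ≥0∞) (R : ℝ)
    (hf : Continuous f) (hg : Continuous g) (hW : Measurable W) (hθ : Measurable θ)
    (hc : Measurable c) (hh : Measurable h)
    (hf0 : ∀ x, 0 ≤ f x) (hg0 : ∀ x, 0 ≤ g x) (hW0 : ∀ x, 0 ≤ W x) (hc0 : ∀ x, 0 < c x)
    (hfR : ∀ x, f x ≠ 0 → ∀ i, x i ∈ Ioo (-R) R) (hgR : ∀ x, g x ≠ 0 → ∀ i, x i ∈ Ioo (-R) R)
    (hfW : ∀ x, f x = 0 → W x = 0) (hfi : 0 < ∫ x, f x) (hgi : 0 < ∫ x, g x)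
    (hcl : ∀ x, ∀ l : ℝ, 0 < l → c x * l ^ θ x ≤ (1 + l) / 2)
    (H : ∀ x y, 0 < f x → 0 < g y →
      ENNReal.ofReal (W x * (g y / f x) ^ θ x) ≤ h ((1/2 : ℝ) • (x + y))) :
    ∫⁻ x, ENNReal.ofReal (W x * c x ^ k * ((∫ x, g x) / (∫ x, f x)) ^ θ x) ≤ ∫⁻ x, h x := by
  have hmp := PiLp.volume_preserving_toLp (Fin k)
  have hemb : MeasurableEmbedding (WithLp.toLp 2 : (Fin k → ℝ) → EuclideanSpace ℝ (Fin k)) :=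
    (MeasurableEquiv.toLp 2 (Fin k → ℝ)).measurableEmbedding
  have hcont : Continuous (WithLp.toLp 2 : (Fin k → ℝ) → EuclideanSpace ℝ (Fin k)) :=
    PiLp.continuous_toLp 2 _
  have ef := hmp.integral_comp hemb f
  have eg := hmp.integral_comp hemb g
  have e1 := hmp.lintegral_comp_emb hemb h
  have e2 := hmp.lintegral_comp_emb hemb
    (fun x => ENNReal.ofReal (W x * c x ^ k * ((∫ x, g x) / (∫ x, f x)) ^ θ x))
  rw [← e1, ← e2, ← ef, ← eg]
  refine aux_PL k (fun x => f (WithLp.toLp 2 x)) (fun x => g (WithLp.toLp 2 x))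
    (fun x => W (WithLp.toLp 2 x)) (fun x => θ (WithLp.toLp 2 x)) (fun x => c (WithLp.toLp 2 x))
    (fun x => h (WithLp.toLp 2 x)) R (hf.comp hcont) (hg.comp hcont) (hW.comp hmp.measurable)
    (hθ.comp hmp.measurable) (hc.comp hmp.measurable) (hh.comp hmp.measurable)
    (fun x => hf0 _) (fun x => hg0 _) (fun x => hW0 _) (fun x => hc0 _)
    (fun x hx => hfR _ hx) (fun x hx => hgR _ hx) (fun x hx => hfW _ hx)
    (by rw [ef]; exact hfi) (by rw [eg]; exact hgi) (fun x => hcl _) ?_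
  intro x y hx hy
  exact H _ _ hx hy

lemma aux_cut (n : ℕ) (hn : 0 < n) (A : Set (EuclideanSpace ℝ (Fin n))) (hA : IsCompact A) :
    ∃ φ : ℕ → EuclideanSpace ℝ (Fin n) → ℝ, (∀ j, Continuous (φ j)) ∧ (∀ j x, 0 ≤ φ j x) ∧
      (∀ j x, φ j x ≤ 1) ∧ (∀ j x, x ∉ interior A → φ j x = 0) ∧
      (∀ j x, x ∈ interior A → 0 < φ j x) ∧
      (∀ x, x ∈ interior A → Filter.Tendsto (fun j => φ j x) Filter.atTop (nhds 1)) := by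
  have : Nonempty (Fin n) := ⟨⟨0, hn⟩⟩
  have hne : ((interior A)ᶜ).Nonempty := by
    rw [nonempty_compl]
    intro h
    have : A = univ := univ_subset_iff.1 (h ▸ interior_subset)
    exact noncompact_univ _ (this ▸ hA)
  have hcl : IsClosed (interior A)ᶜ := isOpen_interior.isClosed_compl
  have hpos : ∀ x, x ∈ interior A → 0 < Metric.infDist x (interior A)ᶜ := by
    intro x hx
    exact (hcl.notMem_iff_infDist_pos hne).1 (by simpa using hx)
  refine ⟨fun j x => min 1 (((j:ℝ)+1) * Metric.infDist x (interior A)ᶜ), ?_, ?_, ?_, ?_, ?_, ?_⟩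
  · intro j
    have := Metric.continuous_infDist_pt (interior A)ᶜ
    fun_prop
  · intro j x
    have := Metric.infDist_nonneg (x := x) (s := (interior A)ᶜ)
    positivity
  · intro j x; exact min_le_left _ _
  · intro j x hx
    have : Metric.infDist x (interior A)ᶜ = 0 := Metric.infDist_zero_of_mem hx
    simp [this]
  · intro j x hx
    have := hpos x hx
    positivity
  · intro x hx
    have h0 := hpos x hx
    obtain ⟨N, hN⟩ := exists_nat_gt (1 / Metric.infDist x (interior A)ᶜ)
    apply tendsto_const_nhds.congr'
    filter_upwards [Filter.eventually_ge_atTop N] with j hj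
    symm
    apply min_eq_left
    have : (N:ℝ) ≤ j := by exact_mod_cast hj
    rw [div_lt_iff₀ h0] at hN
    nlinarith

lemma aux_D3 (n : ℕ) (hn : 0 < n) (V : EuclideanSpace ℝ (Fin n) → ℝ) (hVc : Continuous V)
    (A B : Set (EuclideanSpace ℝ (Fin n)))
    (hAc : IsCompact A) (hAv : Convex ℝ A) (hAi : (interior A).Nonempty)
    (hBc : IsCompact B) (hBv : Convex ℝ B) (hBi : (interior B).Nonempty)
    (θ D c : EuclideanSpace ℝ (Fin n) → ℝ) (hθ : Measurable θ) (hD : Measurable D)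
    (hc : Measurable c) (hθ0 : ∀ x, 0 ≤ θ x) (hθ1 : ∀ x, θ x ≤ 1) (hD0 : ∀ x, 0 ≤ D x)
    (hc0 : ∀ x, 0 < c x) (hcl : ∀ x, ∀ l : ℝ, 0 < l → c x * l ^ θ x ≤ (1 + l) / 2)
    (H : ∀ x y, D x * Real.exp (-V x) * (Real.exp (-V y) / Real.exp (-V x)) ^ θ x ≤
      Real.exp (-V ((1/2 : ℝ) • (x + y)))) :
    ∫⁻ x in A, ENNReal.ofReal (D x * Real.exp (-V x) * c x ^ n *
      ((∫ x in B, Real.exp (-V x)) / (∫ x in A, Real.exp (-V x))) ^ θ x) ≤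
    ∫⁻ x in (1/2 : ℝ) • (A + B), ENNReal.ofReal (Real.exp (-V x)) := by
  obtain ⟨φ, φc, φ0, φ1, φz, φp, φt⟩ := aux_cut n hn A hAc
  obtain ⟨ψ, ψc, ψ0, ψ1, ψz, ψp, ψt⟩ := aux_cut n hn B hBc
  have hMc : IsCompact ((1/2 : ℝ) • (A + B)) := (hAc.add hBc).smul _
  have hMm := hMc.measurableSet
  -- bounding box
  obtain ⟨R, hR⟩ : ∃ R : ℝ, ∀ x ∈ A ∪ B, ‖x‖ ≤ R := (hAc.union hBc).isBounded.exists_norm_le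
  have hbox : ∀ x ∈ A ∪ B, ∀ i, x i ∈ Ioo (-(R+1)) (R+1) := by
    intro x hx i
    have h1 := hR x hx
    have h2 : ‖x i‖ ≤ ‖x‖ := PiLp.norm_apply_le x i
    rw [Real.norm_eq_abs, abs_le] at h2
    constructor <;> linarith [h2.1, h2.2]
  -- generic facts on cutoffs
  have gen : ∀ (A : Set (EuclideanSpace ℝ (Fin n))) (hAc : IsCompact A) (hAv : Convex ℝ A)
      (hAi : (interior A).Nonempty) (φ : ℕ → EuclideanSpace ℝ (Fin n) → ℝ)
      (φc : ∀ j, Continuous (φ j)) (φ0 : ∀ j x, 0 ≤ φ j x) (φ1 : ∀ j x, φ j x ≤ 1)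
      (φz : ∀ j x, x ∉ interior A → φ j x = 0) (φp : ∀ j x, x ∈ interior A → 0 < φ j x)
      (φt : ∀ x, x ∈ interior A → Filter.Tendsto (fun j => φ j x) Filter.atTop (nhds 1)),
      (∀ j, 0 < ∫ x, φ j x * Real.exp (-V x)) ∧ (0 < ∫ x in A, Real.exp (-V x)) ∧
      Filter.Tendsto (fun j => ∫ x, φ j x * Real.exp (-V x)) Filter.atTop
        (nhds (∫ x in A, Real.exp (-V x))) := by
    intro A hAc hAv hAi φ φc φ0 φ1 φz φp φt
    have hint : IntegrableOn (fun x => Real.exp (-V x)) A :=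
      (Continuous.continuousOn (by fun_prop)).integrableOn_compact hAc
    have hint' : Integrable (A.indicator fun x => Real.exp (-V x)) :=
      (integrable_indicator_iff hAc.measurableSet).2 hint
    have hpos : ∀ j, 0 < ∫ x, φ j x * Real.exp (-V x) := by
      intro j
      obtain ⟨x, hx⟩ := hAi
      have hcj := φc j
      refine Continuous.integral_pos_of_hasCompactSupport_nonneg_nonzero (x := x) (by fun_prop) ?_ ?_ ?_
      · apply HasCompactSupport.intro hAc
        intro y hy
        rw [φz j y (fun h => hy (interior_subset h)), zero_mul]
      · intro y
        have := φ0 j y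
        show 0 ≤ φ j y * Real.exp (-V y)
        positivity
      · have := φp j x hx
        positivity
    have hbd : ∀ j x, φ j x * Real.exp (-V x) ≤ A.indicator (fun x => Real.exp (-V x)) x := by
      intro j x
      by_cases hx : x ∈ A
      · rw [indicator_of_mem hx]
        have := φ1 j x
        have := Real.exp_pos (-V x)
        nlinarith
      · rw [indicator_of_notMem hx, φz j x (fun h => hx (interior_subset h)), zero_mul]
    refine ⟨hpos, ?_, ?_⟩
    · refine (hpos 0).trans_le ?_
      rw [← integral_indicator hAc.measurableSet]
      have hcj := φc 0
      refine integral_mono_of_nonneg (Filter.Eventually.of_forall fun x => ?_) hint'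
        (Filter.Eventually.of_forall fun x => hbd 0 x)
      have := φ0 0 x
      show 0 ≤ φ 0 x * Real.exp (-V x)
      positivity
    · rw [← integral_indicator hAc.measurableSet]
      refine tendsto_integral_of_dominated_convergence (A.indicator fun x => Real.exp (-V x)) ?_ hint' ?_ ?_
      · intro j
        have hcj := φc j
        exact Continuous.aestronglyMeasurable (by fun_prop)
      · intro j
        filter_upwards with x
        rw [Real.norm_of_nonneg (mul_nonneg (φ0 j x) (Real.exp_pos _).le)]
        exact hbd j x
      · have hfr : volume (frontier A) = 0 := hAv.addHaar_frontier volume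
        have : ∀ᵐ x, x ∉ frontier A := measure_eq_zero_iff_ae_notMem.1 hfr
        filter_upwards [this] with x hx
        by_cases hxA : x ∈ A
        · have hxi : x ∈ interior A := by
            by_contra h
            exact hx ⟨subset_closure hxA, h⟩
          rw [indicator_of_mem hxA]
          simpa using (φt x hxi).mul_const (Real.exp (-V x))
        · rw [indicator_of_notMem hxA]
          have : ∀ j, φ j x * Real.exp (-V x) = 0 := by
            intro j
            rw [φz j x (fun h => hxA (interior_subset h)), zero_mul]
          simp [this]
  obtain ⟨fpos, FA, ft⟩ := gen A hAc hAv hAi φ φc φ0 φ1 φz φp φt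
  obtain ⟨gpos, FB, gt⟩ := gen B hBc hBv hBi ψ ψc ψ0 ψ1 ψz ψp ψt
  have step : ∀ j, ∫⁻ x, ENNReal.ofReal (D x * (φ j x * Real.exp (-V x)) * c x ^ n *
      ((∫ x, ψ j x * Real.exp (-V x)) / (∫ x, φ j x * Real.exp (-V x))) ^ θ x) ≤
      ∫⁻ x in (1/2 : ℝ) • (A + B), ENNReal.ofReal (Real.exp (-V x)) := by
    intro j
    have hcj := φc j
    have hcj' := ψc j
    rw [← lintegral_indicator hMm]
    refine aux_PLE n (fun x => φ j x * Real.exp (-V x)) (fun x => ψ j x * Real.exp (-V x))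
      (fun x => D x * (φ j x * Real.exp (-V x))) θ c _ (R+1) (by fun_prop) (by fun_prop)
      (by fun_prop) hθ hc (Measurable.indicator (by fun_prop) hMm)
      (fun x => mul_nonneg (φ0 j x) (Real.exp_pos _).le)
      (fun x => mul_nonneg (ψ0 j x) (Real.exp_pos _).le)
      (fun x => mul_nonneg (hD0 x) (mul_nonneg (φ0 j x) (Real.exp_pos _).le)) hc0 ?_ ?_ ?_
      (fpos j) (gpos j) hcl ?_
    · intro x hx
      apply hbox
      left
      by_contra h
      exact hx (by simp [φz j x (fun h' => h (interior_subset h'))])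
    · intro x hx
      apply hbox
      right
      by_contra h
      exact hx (by simp [ψz j x (fun h' => h (interior_subset h'))])
    · intro x hx
      show D x * (φ j x * Real.exp (-V x)) = 0
      rw [hx, mul_zero]
    · intro x y hx hy
      have hxA : x ∈ A := by
        by_contra h
        simp [φz j x (fun h' => h (interior_subset h'))] at hx
      have hyB : y ∈ B := by
        by_contra h
        simp [ψz j y (fun h' => h (interior_subset h'))] at hy
      have hmem : (1/2:ℝ) • (x + y) ∈ (1/2 : ℝ) • (A + B) :=
        smul_mem_smul_set (add_mem_add hxA hyB)
      rw [indicator_of_mem hmem]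
      apply ENNReal.ofReal_le_ofReal
      have hφ : 0 < φ j x := pos_of_mul_pos_left hx (Real.exp_pos _).le
      have hψ : 0 < ψ j y := pos_of_mul_pos_left hy (Real.exp_pos _).le
      have h1 : φ j x * (ψ j y / φ j x) ^ θ x ≤ 1 := by
        calc φ j x * (ψ j y / φ j x) ^ θ x ≤ φ j x * (1 / φ j x) ^ θ x := by
              gcongr
              · exact hθ0 x
              · exact ψ1 j y
          _ ≤ φ j x * (1 / φ j x) ^ (1:ℝ) := by
              gcongr
              · rw [le_div_iff₀ hφ, one_mul]; exact φ1 j x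
              · exact hθ1 x
          _ = 1 := by rw [Real.rpow_one]; field_simp
      have h2 : ψ j y * Real.exp (-V y) / (φ j x * Real.exp (-V x))
        = (ψ j y / φ j x) * (Real.exp (-V y) / Real.exp (-V x)) := by
        rw [mul_div_mul_comm]
      rw [h2, Real.mul_rpow (by positivity) (by positivity)]
      have h3 := H x y
      have h4 : 0 ≤ D x * Real.exp (-V x) * (Real.exp (-V y) / Real.exp (-V x)) ^ θ x := by
        have := hD0 x
        positivity
      calc _ = (φ j x * (ψ j y / φ j x) ^ θ x) *
            (D x * Real.exp (-V x) * (Real.exp (-V y) / Real.exp (-V x)) ^ θ x) := by ring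
        _ ≤ 1 * (D x * Real.exp (-V x) * (Real.exp (-V y) / Real.exp (-V x)) ^ θ x) := by gcongr
        _ ≤ _ := by rw [one_mul]; exact h3
  set ρ := (∫ x in B, Real.exp (-V x)) / (∫ x in A, Real.exp (-V x)) with hρ
  have hρ0 : 0 < ρ := by positivity
  have hρt := gt.div ft FA.ne'
  set G : ℕ → EuclideanSpace ℝ (Fin n) → ℝ≥0∞ := fun j x =>
    ENNReal.ofReal (D x * (φ j x * Real.exp (-V x)) * c x ^ n *
      ((∫ x, ψ j x * Real.exp (-V x)) / (∫ x, φ j x * Real.exp (-V x))) ^ θ x) with hG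
  have hfatou := lintegral_liminf_le (u := Filter.atTop) (μ := (volume : Measure (EuclideanSpace ℝ (Fin n)))) (f := G)
    (fun j => by
      have hcj := φc j
      simp only [hG]
      fun_prop)
  refine le_trans ?_ (le_trans hfatou ?_)
  · have hfr : volume (frontier A) = 0 := hAv.addHaar_frontier volume
    have : ∀ᵐ x, x ∉ frontier A := measure_eq_zero_iff_ae_notMem.1 hfr
    rw [← lintegral_indicator hAc.measurableSet]
    apply lintegral_mono_ae
    filter_upwards [this] with x hx
    by_cases hxA : x ∈ A
    · have hxi : x ∈ interior A := by
        by_contra h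
        exact hx ⟨subset_closure hxA, h⟩
      rw [indicator_of_mem hxA]
      apply le_of_eq
      symm
      apply Filter.Tendsto.liminf_eq
      apply ENNReal.tendsto_ofReal
      have t1 := (((φt x hxi).mul_const (Real.exp (-V x))).const_mul (D x)).mul_const (c x ^ n)
      have t2 := hρt.rpow_const (p := θ x) (Or.inl hρ0.ne')
      simpa using t1.mul t2
    · rw [indicator_of_notMem hxA]
      exact zero_le
  · apply Filter.liminf_le_of_frequently_le'
    exact Filter.Frequently.of_forall step

lemma aux_half (p q : ℝ) (hq : 0 < q) : q * (1 / (2 * q)) ^ p = 1 / 2 * (2 * q) ^ (1 - p) := by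
  have h2 : 0 < 2 * q := by linarith
  rw [one_div, Real.inv_rpow h2.le, Real.rpow_sub h2, Real.rpow_one]
  ring

lemma aux_D4a (n : ℕ) (hn : 0 < n) (p : ℝ) (hp : 1 < p)
    (V : EuclideanSpace ℝ (Fin n) → ℝ)
    (hVnn : ∀ x, 0 ≤ V x) (hVconv : ConvexOn ℝ Set.univ V) (hVc : Continuous V)
    (hVhom : ∀ (x : EuclideanSpace ℝ (Fin n)) (c : ℝ), 0 < c → V (c • x) = c ^ p * V x)
    (α : ℝ) (hα : α = ∫ s in Ioi (0:ℝ), Real.exp (-(s * n)) * (1 + s * (p / (p - 1))) ^ (-((n:ℝ) / p)))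
    (κ : ℝ) (hκ : 0 < κ) (hκ1 : κ < 1) :
    ∃ ε₀ > 0, ∀ A B : Set (EuclideanSpace ℝ (Fin n)),
      IsCompact A → Convex ℝ A → (interior A).Nonempty → 0 ∈ A →
      IsCompact B → Convex ℝ B → (interior B).Nonempty →
      ∀ ε : ℝ, |ε| < ε₀ → 0 < ∫ x in A, Real.exp (-V x) →
      (∫ x in B, Real.exp (-V x)) = (∫ x in A, Real.exp (-V x)) * Real.exp ε →
      (∫ x in A, Real.exp (-V x)) * (Real.exp (ε / 2) * (1 + (1 - κ) * α * (ε ^ 2 / 8))) ≤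
        ∫ x in (1/2 : ℝ) • (A + B), Real.exp (-V x) := by
  have hn' : (1:ℝ) ≤ n := by exact_mod_cast hn
  have hp1 : 0 < p - 1 := by linarith
  have hp0 : 0 < p := by linarith
  have hα0 : 0 < α := by rw [hα]; exact aux_alpha_pos n hn p hp
  set c₀ := p / (p - 1) with hc₀
  have hc0 : 0 < c₀ := by positivity
  have hev := ((aux_C κ hκ).and (aux_u p κ hp hκ)).and
    (Metric.eventually_nhds_iff.2 ⟨1/2, by norm_num, fun {y} (h : dist y 0 < 1/2) => h⟩)
  obtain ⟨ε₀, hε₀, hball⟩ := Metric.eventually_nhds_iff.1 hev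
  refine ⟨ε₀, hε₀, ?_⟩
  intro A B hAc hAv hAi hA0 hBc hBv hBi ε hε hIA hIB
  have hw : ∀ x, 1 ≤ n + c₀ * V x := fun x => by
    have := mul_nonneg hc0.le (hVnn x); linarith
  set s : EuclideanSpace ℝ (Fin n) → ℝ := fun x => ε / (4 * (n + c₀ * V x)) with hs
  have hsc : Continuous s := by
    apply Continuous.div continuous_const (by fun_prop)
    intro x; have := hw x; positivity
  have hsb : ∀ x, dist (s x) 0 < ε₀ := by
    intro x
    rw [Real.dist_0_eq_abs, hs]
    simp only
    have := hw x
    rw [abs_div, abs_of_pos (a := 4 * (n + c₀ * V x)) (by positivity)]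
    refine lt_of_le_of_lt (div_le_self (abs_nonneg _) (by linarith)) hε
  have hS := fun x => hball (hsb x)
  have hs2 : ∀ x, -(1/2) < s x ∧ s x < 1/2 := by
    intro x
    have := (hS x).2
    rw [Real.dist_0_eq_abs, abs_lt] at this
    exact this
  have main := aux_D3 n hn V hVc A B hAc hAv hAi hBc hBv hBi (fun x => 1/2 + s x)
    (fun x => Real.exp (-(2 * (1 + κ) * (s x)^2 * (c₀ * V x))))
    (fun x => Real.exp (-(2 * (1 + κ) * (s x)^2)))
    (by fun_prop) (by fun_prop) (by fun_prop)
    (fun x => by linarith [(hs2 x).1]) (fun x => by linarith [(hs2 x).2])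
    (fun x => (Real.exp_pos _).le) (fun x => Real.exp_pos _)
    (fun x l hl => (hS x).1.1 l hl) (by
      intro x y
      obtain ⟨u, hu0, hu1, hu2, hu3⟩ := (hS x).1.2
      have hu1' : 0 < 1 - u := by linarith
      have hmid : (1/2:ℝ) • (x + y) = (1 - u) • ((1 / (2 * (1 - u))) • x) + u • ((1 / (2 * u)) • y) := by
        rw [smul_smul, smul_smul, smul_add]
        congr 2 <;> field_simp
      have hcv := hVconv.2 (mem_univ ((1 / (2 * (1 - u))) • x)) (mem_univ ((1 / (2 * u)) • y))
        hu1'.le hu0.le (by ring)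
      rw [← hmid, hVhom x _ (by positivity), hVhom y _ (by positivity), smul_eq_mul, smul_eq_mul,
        ← mul_assoc, ← mul_assoc, aux_half p _ hu1', aux_half p _ hu0] at hcv
      have h1 := mul_le_mul_of_nonneg_right hu2 (hVnn y)
      have h2 := mul_le_mul_of_nonneg_right hu3 (hVnn x)
      rw [← Real.exp_sub, ← Real.exp_mul, ← Real.exp_add, ← Real.exp_add, Real.exp_le_exp]
      have : p / (p - 1) = c₀ := rfl
      nlinarith)
  have hρ : (∫ x in B, Real.exp (-V x)) / (∫ x in A, Real.exp (-V x)) = Real.exp ε := by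
    rw [hIB]; field_simp
  rw [hρ] at main
  have hpt : ∀ x, Real.exp (ε/2) * (Real.exp (-V x) + (1 - κ) * (ε^2/8) * (Real.exp (-V x) / (n + c₀ * V x)))
      ≤ Real.exp (-(2 * (1 + κ) * (s x)^2 * (c₀ * V x))) * Real.exp (-V x) *
        Real.exp (-(2 * (1 + κ) * (s x)^2)) ^ n * Real.exp ε ^ (1/2 + s x) := by
    intro x
    have hwx := hw x
    have hw0 : 0 < n + c₀ * V x := by linarith
    have e1 : Real.exp (-(2 * (1 + κ) * (s x)^2 * (c₀ * V x))) * Real.exp (-V x) *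
        Real.exp (-(2 * (1 + κ) * (s x)^2)) ^ n * Real.exp ε ^ (1/2 + s x)
        = Real.exp (ε/2) * (Real.exp (-V x) * Real.exp ((1 - κ) * (ε^2/8) / (n + c₀ * V x))) := by
      rw [← Real.exp_nat_mul, ← Real.exp_mul, ← Real.exp_add, ← Real.exp_add, ← Real.exp_add,
        ← Real.exp_add, ← Real.exp_add]
      congr 1
      have : s x * (4 * (n + c₀ * V x)) = ε := by simp only [hs]; field_simp
      generalize hww : (n:ℝ) + c₀ * V x = w at *
      have hV' : c₀ * V x = w - n := by linarith
      rw [hV', ← this]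
      field_simp
      ring
    rw [e1]
    have h3 := Real.add_one_le_exp ((1 - κ) * (ε^2/8) / (n + c₀ * V x))
    gcongr
    calc _ = Real.exp (-V x) * ((1 - κ) * (ε^2/8) / (n + c₀ * V x) + 1) := by ring
      _ ≤ _ := by gcongr
  have hint : ∀ C : Set (EuclideanSpace ℝ (Fin n)), IsCompact C →
      ∫⁻ x in C, ENNReal.ofReal (Real.exp (-V x)) = ENNReal.ofReal (∫ x in C, Real.exp (-V x)) := by
    intro C hC
    rw [ofReal_integral_eq_lintegral_ofReal
      ((Continuous.continuousOn (by fun_prop)).integrableOn_compact hC)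
      (Filter.Eventually.of_forall fun x => (Real.exp_pos _).le)]
  have hMc : IsCompact ((1/2 : ℝ) • (A + B)) := (hAc.add hBc).smul _
  rw [hint _ hMc] at main
  have hstar : ∀ x, ∀ t : ℝ, 1 ≤ t → t • x ∈ A → x ∈ A := by
    intro x t ht hx
    have ht0 : 0 < t := by linarith
    have := hAv.smul_mem_of_zero_mem hA0 hx (t := t⁻¹) ⟨by positivity, inv_le_one_of_one_le₀ ht⟩
    rwa [smul_smul, inv_mul_cancel₀ ht0.ne', one_smul] at this
  have hD2 := aux_D2 n hn p hp V hVnn hVc hVhom A hAc.measurableSet hstar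
  rw [← hc₀, ← hα, hint _ hAc, ← ENNReal.ofReal_mul hα0.le] at hD2
  have hk : 0 ≤ (1 - κ) * (ε^2/8) := by
    have : 0 ≤ 1 - κ := by linarith
    positivity
  have hlow : ENNReal.ofReal (Real.exp (ε/2) * ((∫ x in A, Real.exp (-V x)) +
      (1 - κ) * (ε^2/8) * (α * ∫ x in A, Real.exp (-V x)))) ≤
      ENNReal.ofReal (∫ x in (1/2 : ℝ) • (A + B), Real.exp (-V x)) := by
    refine le_trans ?_ main
    refine le_trans ?_ (lintegral_mono fun x => ENNReal.ofReal_le_ofReal (hpt x))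
    have e2 : ∀ x, ENNReal.ofReal (Real.exp (ε/2) * (Real.exp (-V x) + (1 - κ) * (ε^2/8) *
          (Real.exp (-V x) / (n + c₀ * V x))))
        = ENNReal.ofReal (Real.exp (ε/2)) * (ENNReal.ofReal (Real.exp (-V x)) +
          ENNReal.ofReal ((1 - κ) * (ε^2/8)) * ENNReal.ofReal (Real.exp (-V x) / (n + c₀ * V x))) := by
      intro x
      have hw0 : 0 < n + c₀ * V x := by linarith [hw x]
      rw [ENNReal.ofReal_mul (by positivity), ENNReal.ofReal_add (by positivity) (by positivity),
        ENNReal.ofReal_mul hk]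
    simp_rw [e2]
    rw [lintegral_const_mul _ (by fun_prop), lintegral_add_left (by fun_prop),
      lintegral_const_mul _ (by fun_prop), hint _ hAc, ENNReal.ofReal_mul (by positivity),
      ENNReal.ofReal_add hIA.le (by positivity), ENNReal.ofReal_mul hk]
    gcongr
  rw [ENNReal.ofReal_le_ofReal_iff (by positivity)] at hlow
  refine le_trans (le_of_eq ?_) hlow
  ring

lemma aux_real (a a' : ℝ) (ha : 0 < a) (haa : a < a') :
    ∃ ε₁ > 0, ∀ ε : ℝ, |ε| < ε₁ →
      (1 + Real.exp ε ^ a) / 2 ≤ (Real.exp (ε/2) * (1 + a' * (ε^2/8))) ^ a := by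
  have ha' : 0 < a' := by linarith
  set m := 8 * (a' - a) / (a * a') with hm
  have hm0 : 0 < m := by
    have : 0 < a' - a := by linarith
    positivity
  refine ⟨Real.sqrt m, by positivity, ?_⟩
  intro ε hε
  have h1 : ε^2 < m := by
    rw [← sq_abs]
    have := (Real.lt_sqrt (abs_nonneg ε)).1 hε
    exact this
  have h2 : a * (1 + a' * (ε^2/8)) ≤ a' := by
    rw [hm, lt_div_iff₀ (by positivity)] at h1
    nlinarith
  have hpos : 0 < 1 + a' * (ε^2/8) := by positivity
  have h3 : a * (ε^2/8) ≤ Real.log (1 + a' * (ε^2/8)) := by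
    have h4 := Real.one_sub_inv_le_log_of_pos hpos
    refine le_trans ?_ h4
    rw [← sub_nonneg]
    have : 1 - (1 + a' * (ε^2/8))⁻¹ - a * (ε^2/8)
        = (ε^2/8) * (a' - a * (1 + a' * (ε^2/8))) / (1 + a' * (ε^2/8)) := by
      field_simp; ring
    rw [this]
    have : 0 ≤ a' - a * (1 + a' * (ε^2/8)) := by linarith
    positivity
  have h5 : Real.cosh (a * ε / 2) ≤ (1 + a' * (ε^2/8)) ^ a := by
    refine (Real.cosh_le_exp_half_sq _).trans ?_
    rw [Real.rpow_def_of_pos hpos, Real.exp_le_exp]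
    nlinarith
  rw [Real.mul_rpow (Real.exp_pos _).le hpos.le, ← Real.exp_mul, ← Real.exp_mul]
  calc (1 + Real.exp (ε * a)) / 2 = Real.exp (ε / 2 * a) * Real.cosh (a * ε / 2) := by
        rw [Real.cosh_eq, mul_div_assoc', mul_add, ← Real.exp_add, ← Real.exp_add]
        congr 1
        rw [add_comm]
        congr 1
        · congr 1; ring
        · rw [show ε / 2 * a + -(a * ε / 2) = 0 by ring, Real.exp_zero]
    _ ≤ _ := by gcongr

lemma aux_D4 (n : ℕ) (hn : 0 < n) (p : ℝ) (hp : 1 < p)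
    (V : EuclideanSpace ℝ (Fin n) → ℝ)
    (hVnn : ∀ x, 0 ≤ V x) (hVconv : ConvexOn ℝ Set.univ V) (hVc : Continuous V)
    (hVhom : ∀ (x : EuclideanSpace ℝ (Fin n)) (c : ℝ), 0 < c → V (c • x) = c ^ p * V x)
    (α : ℝ) (hα : α = ∫ s in Ioi (0:ℝ), Real.exp (-(s * n)) * (1 + s * (p / (p - 1))) ^ (-((n:ℝ) / p)))
    (a : ℝ) (ha : 0 < a) (haα : a < α) :
    ∃ ε₀ > 0, ∀ A B : Set (EuclideanSpace ℝ (Fin n)),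
      IsCompact A → Convex ℝ A → (interior A).Nonempty → 0 ∈ A →
      IsCompact B → Convex ℝ B → (interior B).Nonempty →
      0 < ∫ x in A, Real.exp (-V x) → 0 < ∫ x in B, Real.exp (-V x) →
      |Real.log (∫ x in B, Real.exp (-V x)) - Real.log (∫ x in A, Real.exp (-V x))| < ε₀ →
      ((∫ x in A, Real.exp (-V x)) ^ a + (∫ x in B, Real.exp (-V x)) ^ a) / 2 ≤
        (∫ x in (1/2 : ℝ) • (A + B), Real.exp (-V x)) ^ a := by
  have hα0 : 0 < α := ha.trans haα
  set κ := (1 - a / α) / 2 with hκ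
  have hr : a / α < 1 := by rw [div_lt_one hα0]; exact haα
  have hr0 : 0 < a / α := by positivity
  have hκ0 : 0 < κ := by rw [hκ]; linarith
  have hκ1 : κ < 1 := by rw [hκ]; linarith
  have haa : a < (1 - κ) * α := by
    have : a = a / α * α := by field_simp
    calc a = a / α * α := this
      _ < (1 - κ) * α := by
        apply mul_lt_mul_of_pos_right _ hα0
        rw [hκ]; linarith
  obtain ⟨ε₀, hε₀, h1⟩ := aux_D4a n hn p hp V hVnn hVconv hVc hVhom α hα κ hκ0 hκ1
  obtain ⟨ε₁, hε₁, h2⟩ := aux_real a _ ha haa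
  refine ⟨min ε₀ ε₁, by positivity, ?_⟩
  intro A B hAc hAv hAi hA0 hBc hBv hBi hIA hIB hε
  set ε := Real.log (∫ x in B, Real.exp (-V x)) - Real.log (∫ x in A, Real.exp (-V x)) with he
  have hB : (∫ x in B, Real.exp (-V x)) = (∫ x in A, Real.exp (-V x)) * Real.exp ε := by
    rw [he, Real.exp_sub, Real.exp_log hIA, Real.exp_log hIB]; field_simp
  have h3 := h1 A B hAc hAv hAi hA0 hBc hBv hBi ε (hε.trans_le (min_le_left _ _)) hIA hB
  have h4 := h2 ε (hε.trans_le (min_le_right _ _))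
  rw [hB, Real.mul_rpow hIA.le (Real.exp_pos _).le]
  have hp0 : 0 ≤ Real.exp (ε / 2) * (1 + (1 - κ) * α * (ε ^ 2 / 8)) := by
    have : 0 < 1 - κ := by linarith
    positivity
  calc _ = (∫ x in A, Real.exp (-V x)) ^ a * ((1 + Real.exp ε ^ a) / 2) := by ring
    _ ≤ (∫ x in A, Real.exp (-V x)) ^ a *
        (Real.exp (ε / 2) * (1 + (1 - κ) * α * (ε ^ 2 / 8))) ^ a := by gcongr
    _ = ((∫ x in A, Real.exp (-V x)) * (Real.exp (ε / 2) * (1 + (1 - κ) * α * (ε ^ 2 / 8)))) ^ a := by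
        rw [Real.mul_rpow hIA.le hp0]
    _ ≤ _ := by
        apply Real.rpow_le_rpow (mul_nonneg hIA.le hp0) h3 ha.le

lemma aux_glob (F : ℝ → ℝ) (m : ℕ) (a ε₀ : ℝ) (ha : 0 < a) (hε₀ : 0 < ε₀)
    (hF : ∀ t ∈ Icc (0:ℝ) 1, 0 < F t)
    (hsc : ∀ s ∈ Icc (0:ℝ) 1, ∀ t ∈ Icc (0:ℝ) 1, ∀ c : ℝ, 0 < c → c ≤ 1 → c * t ≤ s →
      c * (1 - t) ≤ 1 - s → c ^ m * F t ≤ F s)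
    (hmid : ∀ t h : ℝ, 0 ≤ h → 0 ≤ t - h → t + h ≤ 1 →
      |Real.log (F (t + h)) - Real.log (F (t - h))| < ε₀ →
      (F (t - h) ^ a + F (t + h) ^ a) / 2 ≤ F t ^ a) :
    ∀ t ∈ Icc (0:ℝ) 1, (1 - t) * F 0 ^ a + t * F 1 ^ a ≤ F t ^ a := by
  have hnear : ∀ t₀ ∈ Icc (0:ℝ) 1, ∀ c : ℝ, 0 < c → c < 1 →
      ∀ᶠ s in nhdsWithin t₀ (Icc 0 1), s ∈ Icc (0:ℝ) 1 ∧ c * t₀ ≤ s ∧ c * (1 - t₀) ≤ 1 - s := by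
    intro t₀ ht₀ c hc hc1
    have e1 : ∀ᶠ s in nhdsWithin t₀ (Icc 0 1), c * t₀ ≤ s := by
      rcases ht₀.1.eq_or_lt with h | h
      · filter_upwards [self_mem_nhdsWithin] with s hs
        rw [← h, mul_zero]; exact hs.1
      · exact nhdsWithin_le_nhds ((lt_mem_nhds (show c * t₀ < t₀ by nlinarith)).mono fun s hs => le_of_lt hs)
    have e2 : ∀ᶠ s in nhdsWithin t₀ (Icc 0 1), c * (1 - t₀) ≤ 1 - s := by
      rcases ht₀.2.eq_or_lt with h | h
      · filter_upwards [self_mem_nhdsWithin] with s hs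
        rw [h, sub_self, mul_zero]; linarith [hs.2]
      · exact nhdsWithin_le_nhds ((gt_mem_nhds (show t₀ < 1 - c * (1 - t₀) by nlinarith)).mono
          fun s hs => by linarith)
    filter_upwards [self_mem_nhdsWithin, e1, e2] with s h1 h2 h3
    exact ⟨h1, h2, h3⟩
  have hlsc : LowerSemicontinuousOn (fun t => F t ^ a) (Icc 0 1) := by
    intro t₀ ht₀ y hy
    have hcont : ContinuousAt (fun c : ℝ => (c ^ m * F t₀) ^ a) 1 := by
      apply ContinuousAt.rpow_const (by fun_prop)
      left
      simpa using (hF t₀ ht₀).ne'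
    have hev : ∀ᶠ c in nhds (1:ℝ), y < (c ^ m * F t₀) ^ a :=
      hcont.eventually (lt_mem_nhds (by simpa using hy))
    have hev2 : ∀ᶠ c in nhdsWithin (1:ℝ) (Iio 1), y < (c ^ m * F t₀) ^ a ∧ 0 < c ∧ c < 1 := by
      filter_upwards [nhdsWithin_le_nhds hev, self_mem_nhdsWithin,
        nhdsWithin_le_nhds (lt_mem_nhds (show (0:ℝ) < 1 by norm_num))] with c h1 h2 h3
      exact ⟨h1, h3, h2⟩
    obtain ⟨c, hc, hc0, hc1⟩ := hev2.exists
    filter_upwards [hnear t₀ ht₀ c hc0 hc1] with s hs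
    refine hc.trans_le (Real.rpow_le_rpow ?_ (hsc s hs.1 t₀ ht₀ c hc0 hc1.le hs.2.1 hs.2.2) ha.le)
    have := hF t₀ ht₀
    positivity
  have hlog : ∀ t₀ ∈ Ioo (0:ℝ) 1, ∀ᶠ s in nhds t₀, |Real.log (F s) - Real.log (F t₀)| < ε₀ / 2 := by
    intro t₀ ht₀
    set δ := ε₀ / (4 * (m + 1)) with hδ
    have hδ0 : 0 < δ := by positivity
    have hmδ : m * δ < ε₀ / 2 := by
      have : (m + 1) * δ = ε₀ / 4 := by rw [hδ]; field_simp
      nlinarith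
    set c := Real.exp (-δ) with hc
    have hc0 : 0 < c := Real.exp_pos _
    have hc1 : c < 1 := by rw [hc, Real.exp_lt_one_iff]; linarith
    have hn1 := hnear t₀ ⟨ht₀.1.le, ht₀.2.le⟩ c hc0 hc1
    rw [nhdsWithin_eq_nhds.2 (Icc_mem_nhds ht₀.1 ht₀.2)] at hn1
    have e1 : ∀ᶠ s in nhds t₀, c * s < t₀ :=
      (show ContinuousAt (fun s => c * s) t₀ by fun_prop).eventually (gt_mem_nhds (by nlinarith [ht₀.1]))
    have e2 : ∀ᶠ s in nhds t₀, c * (1 - s) < 1 - t₀ :=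
      (show ContinuousAt (fun s => c * (1 - s)) t₀ by fun_prop).eventually
        (gt_mem_nhds (by nlinarith [ht₀.2]))
    filter_upwards [hn1, e1, e2] with s h1 h2 h3
    have ht : t₀ ∈ Icc (0:ℝ) 1 := ⟨ht₀.1.le, ht₀.2.le⟩
    have b1 := hsc s h1.1 t₀ ht c hc0 hc1.le h1.2.1 h1.2.2
    have b2 := hsc t₀ ht s h1.1 c hc0 hc1.le h2.le h3.le
    have p1 := hF s h1.1
    have p2 := hF t₀ ht
    have l1 := Real.log_le_log (by positivity) b1
    have l2 := Real.log_le_log (by positivity) b2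
    rw [Real.log_mul (by positivity) p2.ne', Real.log_pow, hc, Real.log_exp] at l1
    rw [Real.log_mul (by positivity) p1.ne', Real.log_pow, hc, Real.log_exp] at l2
    rw [abs_lt]
    constructor <;> linarith
  intro t ht
  apply le_of_forall_pos_le_add
  intro η hη
  set H : ℝ → ℝ := fun t => F t ^ a + (-((1 - t) * F 0 ^ a + t * F 1 ^ a) + η * (t * (1 - t))) with hH
  have hHl : LowerSemicontinuousOn H (Icc 0 1) :=
    hlsc.add (Continuous.continuousOn (by fun_prop)).lowerSemicontinuousOn
  obtain ⟨t₀, ht₀, hmin⟩ := hHl.exists_isMinOn (nonempty_Icc.2 zero_le_one) isCompact_Icc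
  have hH0 : 0 ≤ H t₀ := by
    rcases ht₀.1.eq_or_lt with h | h
    · rw [← h]; simp [hH]
    rcases ht₀.2.eq_or_lt with h' | h'
    · rw [h']; simp [hH]
    exfalso
    have hl := hlog t₀ ⟨h, h'⟩
    have e1 : ∀ᶠ k in nhds (0:ℝ), |Real.log (F (t₀ + k)) - Real.log (F t₀)| < ε₀ / 2 :=
      (show Filter.Tendsto (fun k => t₀ + k) (nhds 0) (nhds t₀) by
        simpa using (show ContinuousAt (fun k => t₀ + k) 0 by fun_prop).tendsto).eventually hl
    have e2 : ∀ᶠ k in nhds (0:ℝ), |Real.log (F (t₀ - k)) - Real.log (F t₀)| < ε₀ / 2 :=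
      (show Filter.Tendsto (fun k => t₀ - k) (nhds 0) (nhds t₀) by
        simpa using (show ContinuousAt (fun k => t₀ - k) 0 by fun_prop).tendsto).eventually hl
    have hev : ∀ᶠ k in nhdsWithin (0:ℝ) (Ioi 0), 0 < k ∧ k < t₀ ∧ k < 1 - t₀ ∧
        |Real.log (F (t₀ + k)) - Real.log (F t₀)| < ε₀ / 2 ∧
        |Real.log (F (t₀ - k)) - Real.log (F t₀)| < ε₀ / 2 := by
      filter_upwards [self_mem_nhdsWithin, nhdsWithin_le_nhds (gt_mem_nhds h),
        nhdsWithin_le_nhds (gt_mem_nhds (show 0 < 1 - t₀ by linarith)), nhdsWithin_le_nhds e1,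
        nhdsWithin_le_nhds e2] with k h1 h2 h3 h4 h5
      exact ⟨h1, h2, h3, h4, h5⟩
    obtain ⟨k, k0, k1, k2, k3, k4⟩ := hev.exists
    have hm := hmid t₀ k k0.le (by linarith) (by linarith) (by
      rw [abs_lt] at *
      constructor <;> linarith)
    have m1 : H t₀ ≤ H (t₀ - k) := hmin ⟨by linarith, by linarith⟩
    have m2 : H t₀ ≤ H (t₀ + k) := hmin ⟨by linarith, by linarith⟩
    simp only [hH] at m1 m2
    have : 0 < η * k^2 := by positivity
    nlinarith
  have h1 : H t₀ ≤ H t := hmin ht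
  simp only [hH] at h1 hH0
  have h2 : t * (1 - t) ≤ 1 := by nlinarith [ht.1, ht.2]
  nlinarith

lemma aux_smul_sub {E : Type*} [AddCommGroup E] [Module ℝ E] (K : Set E) (hK : Convex ℝ K)
    (h0 : (0:E) ∈ K) (u v : ℝ) (hu : 0 ≤ u) (huv : u ≤ v) : u • K ⊆ v • K := by
  rintro _ ⟨k, hk, rfl⟩
  rcases (hu.trans huv).eq_or_lt with h | h
  · have : u = 0 := by linarith
    simp only [this, zero_smul]
    exact ⟨0, h0, by simp⟩
  · refine ⟨(u / v) • k, hK.smul_mem_of_zero_mem h0 hk ⟨by positivity, (div_le_one h).2 huv⟩, ?_⟩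
    simp only [smul_smul]
    rw [mul_div_cancel₀ _ h.ne']

lemma aux_final (n : ℕ) (hn : 0 < n) (p : ℝ) (hp : 1 < p)
    (V : EuclideanSpace ℝ (Fin n) → ℝ)
    (hVnn : ∀ x, 0 ≤ V x) (hVconv : ConvexOn ℝ Set.univ V) (hVc : Continuous V)
    (hVhom : ∀ (x : EuclideanSpace ℝ (Fin n)) (c : ℝ), 0 < c → V (c • x) = c ^ p * V x)
    (α : ℝ) (hα : α = ∫ s in Ioi (0:ℝ), Real.exp (-(s * n)) * (1 + s * (p / (p - 1))) ^ (-((n:ℝ) / p)))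
    (K L : Set (EuclideanSpace ℝ (Fin n)))
    (hKc : IsCompact K) (hKv : Convex ℝ K) (hKi : (interior K).Nonempty) (hK0 : 0 ∈ K)
    (hLc : IsCompact L) (hLv : Convex ℝ L) (hLi : (interior L).Nonempty) (hL0 : 0 ∈ L)
    (t : ℝ) (ht : t ∈ Set.Icc (0 : ℝ) 1) :
    (1 - t) * (∫ x in K, Real.exp (-V x)) ^ α + t * (∫ x in L, Real.exp (-V x)) ^ α ≤
      (∫ x in (1 - t) • K + t • L, Real.exp (-V x)) ^ α := by
  have hα0 : 0 < α := by rw [hα]; exact aux_alpha_pos n hn p hp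
  set S : ℝ → Set (EuclideanSpace ℝ (Fin n)) := fun t => (1 - t) • K + t • L with hS
  set F : ℝ → ℝ := fun t => ∫ x in S t, Real.exp (-V x) with hFdef
  have hSc : ∀ t, IsCompact (S t) := fun t => (hKc.smul _).add (hLc.smul _)
  have hSv : ∀ t, Convex ℝ (S t) := fun t => (hKv.smul _).add (hLv.smul _)
  have hS0 : ∀ t, (0 : EuclideanSpace ℝ (Fin n)) ∈ S t := fun t =>
    ⟨0, ⟨0, hK0, by simp⟩, 0, ⟨0, hL0, by simp⟩, by simp⟩
  have hSi : ∀ t ∈ Icc (0:ℝ) 1, (interior (S t)).Nonempty := by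
    intro t ht
    rcases ht.1.eq_or_lt with h | h
    · have hsub : (1 - t) • K ⊆ S t := fun x hx => ⟨x, hx, 0, ⟨0, hL0, by simp⟩, by simp⟩
      have h1 : (1 - t) ≠ 0 := by rw [← h]; norm_num
      refine Set.Nonempty.mono (interior_mono hsub) ?_
      rw [interior_smul₀ h1]
      exact hKi.smul_set
    · have hsub : t • L ⊆ S t := fun x hx => ⟨0, ⟨0, hK0, by simp⟩, x, hx, by simp⟩
      refine Set.Nonempty.mono (interior_mono hsub) ?_
      rw [interior_smul₀ h.ne']
      exact hLi.smul_set
  have hint : ∀ C : Set (EuclideanSpace ℝ (Fin n)), IsCompact C →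
      IntegrableOn (fun x => Real.exp (-V x)) C := fun C hC =>
    (Continuous.continuousOn (by fun_prop)).integrableOn_compact hC
  have hpos : ∀ t ∈ Icc (0:ℝ) 1, 0 < F t := by
    intro t ht
    show 0 < ∫ x in S t, Real.exp (-V x)
    rw [setIntegral_pos_iff_support_of_nonneg_ae
      (Filter.Eventually.of_forall fun x => (Real.exp_pos _).le) (hint _ (hSc t))]
    refine (isOpen_interior.measure_pos volume (hSi t ht)).trans_le (measure_mono ?_)
    intro x hx
    exact ⟨(Real.exp_pos _).ne', interior_subset hx⟩
  have hscale : ∀ s ∈ Icc (0:ℝ) 1, ∀ t ∈ Icc (0:ℝ) 1, ∀ c : ℝ, 0 < c → c ≤ 1 → c * t ≤ s →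
      c * (1 - t) ≤ 1 - s → c ^ n * F t ≤ F s := by
    intro s hs t ht c hc hc1 h1 h2
    have hsub : c • S t ⊆ S s := by
      simp only [hS]
      rw [smul_add, smul_smul, smul_smul]
      exact add_subset_add (aux_smul_sub K hKv hK0 _ _ (mul_nonneg hc.le (by linarith [ht.2])) h2)
        (aux_smul_sub L hLv hL0 _ _ (mul_nonneg hc.le ht.1) h1)
    have h3 : ∫ x in c • S t, Real.exp (-V x) ≤ F s :=
      setIntegral_mono_set (hint _ (hSc s)) (Filter.Eventually.of_forall fun x => (Real.exp_pos _).le)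
        hsub.eventuallyLE
    refine le_trans ?_ h3
    have h4 := Measure.setIntegral_comp_smul (volume : Measure (EuclideanSpace ℝ (Fin n)))
      (fun x => Real.exp (-V x)) (S t) hc.ne'
    rw [finrank_euclideanSpace, Fintype.card_fin, abs_of_pos (by positivity), smul_eq_mul] at h4
    have h5 : F t ≤ ∫ x in S t, Real.exp (-V (c • x)) := by
      apply setIntegral_mono (hint _ (hSc t))
      · exact (Continuous.continuousOn (by fun_prop)).integrableOn_compact (hSc t)
      · intro x
        simp only
        rw [Real.exp_le_exp, hVhom x c hc, neg_le_neg_iff]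
        exact mul_le_of_le_one_left (hVnn x) (Real.rpow_le_one hc.le hc1 (by linarith))
    rw [h4] at h5
    calc c ^ n * F t ≤ c ^ n * ((c ^ n)⁻¹ * ∫ x in c • S t, Real.exp (-V x)) := by gcongr
      _ = _ := by field_simp
  have hSmid : ∀ t h : ℝ, 0 ≤ h → 0 ≤ t - h → t + h ≤ 1 →
      (1/2:ℝ) • (S (t - h) + S (t + h)) = S t := by
    intro t h hh h1 h2
    simp only [hS]
    rw [add_add_add_comm, ← hKv.add_smul (by linarith) (by linarith),
      ← hLv.add_smul (by linarith) (by linarith), smul_add, smul_smul, smul_smul]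
    congr 2 <;> ring
  have hlt : ∀ a : ℝ, 0 < a → a < α → (1 - t) * F 0 ^ a + t * F 1 ^ a ≤ F t ^ a := by
    intro a ha haα
    obtain ⟨ε₀, hε₀, hD⟩ := aux_D4 n hn p hp V hVnn hVconv hVc hVhom α hα a ha haα
    refine aux_glob F n a ε₀ ha hε₀ hpos hscale ?_ t ht
    intro t h hh h1 h2 h3
    have m1 : t - h ∈ Icc (0:ℝ) 1 := ⟨h1, by linarith⟩
    have m2 : t + h ∈ Icc (0:ℝ) 1 := ⟨by linarith, h2⟩
    have := hD (S (t - h)) (S (t + h)) (hSc _) (hSv _) (hSi _ m1) (hS0 _) (hSc _) (hSv _)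
      (hSi _ m2) (hpos _ m1) (hpos _ m2) h3
    rw [hSmid t h hh h1 h2] at this
    exact this
  have hF0 : F 0 = ∫ x in K, Real.exp (-V x) := by
    have : S 0 = K := by
      simp only [hS, sub_zero, one_smul, zero_smul_set ⟨0, hL0⟩]
      simp
    simp only [hFdef, this]
  have hF1 : F 1 = ∫ x in L, Real.exp (-V x) := by
    have : S 1 = L := by
      simp only [hS, sub_self, one_smul, zero_smul_set ⟨0, hK0⟩]
      simp
    simp only [hFdef, this]
  rw [← hF0, ← hF1]
  have p0 := hpos 0 ⟨le_rfl, zero_le_one⟩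
  have p1 := hpos 1 ⟨zero_le_one, le_rfl⟩
  have pt := hpos t ht
  have c0 : ContinuousAt (fun a : ℝ => F 0 ^ a) α := Real.continuousAt_const_rpow p0.ne'
  have c1 : ContinuousAt (fun a : ℝ => F 1 ^ a) α := Real.continuousAt_const_rpow p1.ne'
  have ct : ContinuousAt (fun a : ℝ => F t ^ a) α := Real.continuousAt_const_rpow pt.ne'
  have hl : Filter.Tendsto (fun a : ℝ => (1 - t) * F 0 ^ a + t * F 1 ^ a) (nhdsWithin α (Iio α))
      (nhds ((1 - t) * F 0 ^ α + t * F 1 ^ α)) :=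
    ((c0.tendsto.const_mul _).add (c1.tendsto.const_mul _)).mono_left nhdsWithin_le_nhds
  have hr : Filter.Tendsto (fun a : ℝ => F t ^ a) (nhdsWithin α (Iio α)) (nhds (F t ^ α)) :=
    ct.tendsto.mono_left nhdsWithin_le_nhds
  refine le_of_tendsto_of_tendsto hl hr ?_
  filter_upwards [self_mem_nhdsWithin, nhdsWithin_le_nhds (lt_mem_nhds hα0)] with a h1 h2
  exact hlt a h2 h1

theorem stmt_6 (n : ℕ) (hn : 2 ≤ n) (p : ℝ) (hp : 1 < p)
    (V : EuclideanSpace ℝ (Fin n) → ℝ)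
    (hVnn : ∀ x, 0 ≤ V x) (hVconv : ConvexOn ℝ Set.univ V)
    (hVhom : ∀ (x : EuclideanSpace ℝ (Fin n)) (c : ℝ), 0 < c → V (c • x) = c ^ p * V x)
    (μ : Measure (EuclideanSpace ℝ (Fin n)))
    (hμ : μ = volume.withDensity (fun x => ENNReal.ofReal (Real.exp (-V x))))
    (hfin : IsFiniteMeasure μ)
    (α : ℝ)
    (hα : α = (1 / (n : ℝ)) * Real.exp ((p - 1) * n / p) * ((p - 1) * n / p) ^ ((n : ℝ) / p) *
      uiGamma (1 - (n : ℝ) / p) ((p - 1) * n / p))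
    (K L : Set (EuclideanSpace ℝ (Fin n)))
    (hKc : IsCompact K) (hKv : Convex ℝ K) (hKi : (interior K).Nonempty) (hK0 : 0 ∈ K)
    (hLc : IsCompact L) (hLv : Convex ℝ L) (hLi : (interior L).Nonempty) (hL0 : 0 ∈ L)
    (lam : ℝ) (hlam : lam ∈ Set.Icc (0 : ℝ) 1) :
    lam * (μ K).toReal ^ α + (1 - lam) * (μ L).toReal ^ α ≤
      (μ (lam • K + (1 - lam) • L)).toReal ^ α := by
  have hn0 : 0 < n := by omega
  have hVc : Continuous V := by
    rw [← continuousOn_univ]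
    exact hVconv.continuousOn isOpen_univ
  have hm : ∀ C : Set (EuclideanSpace ℝ (Fin n)), IsCompact C →
      (μ C).toReal = ∫ x in C, Real.exp (-V x) := by
    intro C hC
    rw [hμ, withDensity_apply _ hC.measurableSet, ← ofReal_integral_eq_lintegral_ofReal
      ((Continuous.continuousOn (by fun_prop)).integrableOn_compact hC)
      (Filter.Eventually.of_forall fun x => (Real.exp_pos _).le), ENNReal.toReal_ofReal]
    exact integral_nonneg fun x => (Real.exp_pos _).le
  rw [hm K hKc, hm L hLc, hm _ ((hKc.smul _).add (hLc.smul _))]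
  have := aux_final n hn0 p hp V hVnn hVconv hVc hVhom α
    (hα.trans (aux_alpha n hn0 p hp)) K L hKc hKv hKi hK0 hLc hLv hLi hL0 (1 - lam)
    ⟨by linarith [hlam.2], by linarith [hlam.1]⟩
  rwa [sub_sub_cancel] at this
end

section
/- For every integer n ≥ 2, the limit as p → 1⁺ of (1/n) · e^{(p-1)n/p} · ((p-1)n/p)^{n/p} · Γ(1 - n/p, (p-1)n/p) equals 0. -/
open MeasureTheory Real Set Filter

theorem uiGamma_bd (a x : ℝ) (ha : 1 < a) (hx : 0 < x) :
    0 ≤ uiGamma (1 - a) x ∧ x ^ a * uiGamma (1 - a) x ≤ x / (a - 1) := by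
  have h0 : 0 ≤ uiGamma (1 - a) x := by
    unfold uiGamma
    refine setIntegral_nonneg measurableSet_Ioi fun t ht => ?_
    have : 0 < t := hx.trans ht
    positivity
  refine ⟨h0, ?_⟩
  have h1 : uiGamma (1 - a) x ≤ ∫ t in Set.Ioi x, t ^ (-a) := by
    unfold uiGamma
    refine integral_mono_of_nonneg ?_ (integrableOn_Ioi_rpow_of_lt (by linarith) hx) ?_
    · refine (ae_restrict_iff' measurableSet_Ioi).2 (Eventually.of_forall fun t ht => ?_)
      have : 0 < t := hx.trans ht
      simp only [Pi.zero_apply]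
      positivity
    · refine (ae_restrict_iff' measurableSet_Ioi).2 (Eventually.of_forall fun t ht => ?_)
      have h : 0 < t := hx.trans ht
      have e : 1 - a - 1 = -a := by ring
      simp only [e]
      exact mul_le_of_le_one_right (by positivity) (Real.exp_le_one_iff.2 (by linarith))
  rw [integral_Ioi_rpow_of_lt (by linarith) hx] at h1
  calc x ^ a * uiGamma (1 - a) x ≤ x ^ a * (-x ^ (-a + 1) / (-a + 1)) := by gcongr
    _ = (x ^ a * x ^ (-a + 1)) / (a - 1) := by
      have : a - 1 ≠ 0 := by linarith
      have : -a + 1 ≠ 0 := by intro h; apply this; linarith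
      field_simp
      ring
    _ = x / (a - 1) := by
      rw [← Real.rpow_add hx]
      simp

theorem stmt_10 (n : ℕ) (hn : 2 ≤ n) :
    Filter.Tendsto (fun p : ℝ =>
        (1 / (n : ℝ)) * Real.exp ((p - 1) * n / p) * ((p - 1) * n / p) ^ ((n : ℝ) / p) *
          uiGamma (1 - (n : ℝ) / p) ((p - 1) * n / p))
      (nhdsWithin 1 (Set.Ioi 1)) (nhds 0) := by
  have hn' : (2 : ℝ) ≤ n := by exact_mod_cast hn
  have hg : Tendsto (fun p : ℝ => (1 / (n : ℝ)) * Real.exp ((p - 1) * n / p) *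
      (((p - 1) * n / p) / ((n : ℝ) / p - 1))) (nhdsWithin 1 (Set.Ioi 1)) (nhds 0) := by
    have hc : ContinuousAt (fun p : ℝ => (1 / (n : ℝ)) * Real.exp ((p - 1) * n / p) *
      (((p - 1) * n / p) / ((n : ℝ) / p - 1))) 1 := by
      have h1 : (n : ℝ) / 1 - 1 ≠ 0 := by
        intro h; rw [div_one] at h; linarith
      have h2 : ContinuousAt (fun p : ℝ => (p - 1) * n / p) 1 :=
        ContinuousAt.div (by fun_prop) continuousAt_id one_ne_zero
      have h3 : ContinuousAt (fun p : ℝ => (n : ℝ) / p - 1) 1 :=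
        (ContinuousAt.div continuousAt_const continuousAt_id one_ne_zero).sub continuousAt_const
      exact (continuousAt_const.mul h2.rexp).mul (h2.div h3 h1)
    have := hc.tendsto
    simp only [sub_self, zero_mul, zero_div, mul_zero] at this
    exact this.mono_left nhdsWithin_le_nhds
  have hev : ∀ᶠ p : ℝ in nhdsWithin 1 (Set.Ioi 1), 1 < p ∧ p < 2 := by
    filter_upwards [Ioo_mem_nhdsGT (show (1 : ℝ) < 2 by norm_num)] with p hp using hp
  refine squeeze_zero' ?_ ?_ hg
  · filter_upwards [hev] with p hp
    have hp0 : 0 < p := by linarith [hp.1]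
    have hx : 0 < (p - 1) * n / p := div_pos (mul_pos (by linarith [hp.1]) (by linarith)) hp0
    have := (uiGamma_bd (n / p) _ (by rw [lt_div_iff₀ hp0]; linarith [hp.2]) hx).1
    positivity
  · filter_upwards [hev] with p hp
    have hp0 : 0 < p := by linarith [hp.1]
    have hx : 0 < (p - 1) * n / p := div_pos (mul_pos (by linarith [hp.1]) (by linarith)) hp0
    have := (uiGamma_bd (n / p) _ (by rw [lt_div_iff₀ hp0]; linarith [hp.2]) hx).2
    rw [mul_assoc]
    gcongr
end

section
/- Fix a real p > 1 and define, for integers n ≥ 2, f₁(n) = (1/n) · e^{(p-1)n/p} · ((p-1)n/p)^{n/p} · Γ(1 - n/p, (p-1)n/p). Then f₁(n) = (p-1)/(pn) + O(n^{-2}) as n → ∞; that is, there exists a constant C > 0 such that |f₁(n) - (p-1)/(pn)| ≤ C/n² for all sufficiently large n. -/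
open MeasureTheory Real Set

theorem aux_deriv (a t : ℝ) (ha : 0 < a) (ht : 0 < t) :
    HasDerivAt (fun t : ℝ => -(t ^ (1 - a) * Real.exp (-t) / (t + a)))
      (t ^ ((1 - a) - 1) * Real.exp (-t) * (1 - a / (t + a) ^ 2)) t := by
  have h1 : HasDerivAt (fun t : ℝ => t ^ (1 - a)) ((1 - a) * t ^ ((1 - a) - 1)) t :=
    Real.hasDerivAt_rpow_const (Or.inl ht.ne')
  have h2 : HasDerivAt (fun t : ℝ => Real.exp (-t)) (Real.exp (-t) * (-1)) t :=
    (hasDerivAt_id t).neg.exp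
  have h3 : HasDerivAt (fun t : ℝ => t + a) 1 t := (hasDerivAt_id t).add_const a
  have hne : t + a ≠ 0 := by positivity
  have h4 := ((h1.mul h2).div h3 hne).neg
  refine h4.congr_deriv ?_
  have e : t ^ (1 - a) = t ^ ((1 - a) - 1) * t := by
    rw [← Real.rpow_add_one ht.ne']; congr 1; ring
  simp only [Pi.mul_apply]
  rw [e]
  field_simp
  ring

theorem aux_bound (a x : ℝ) (ha : 0 < a) (hx : 0 < x) (hm : 2 ≤ x + a) :
    |Real.exp x * x ^ a * uiGamma (1 - a) x - x / (x + a)| ≤ 2 / (x + a) := by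
  set h : ℝ → ℝ := fun t => t ^ ((1 - a) - 1) * Real.exp (-t) with hh
  have hmeas : Measurable h := by rw [hh]; fun_prop
  have hpos : ∀ t ∈ Ioi x, 0 ≤ h t := fun t ht => by
    have : 0 < t := hx.trans ht
    simp only [hh]; positivity
  have hint0 : IntegrableOn (fun t => x ^ ((1 - a) - 1) * Real.exp (-t)) (Ioi x) :=
    (integrableOn_exp_neg_Ioi x).const_mul _
  have hint : IntegrableOn h (Ioi x) := by
    refine Integrable.mono' hint0 hmeas.aestronglyMeasurable ?_
    refine (ae_restrict_iff' measurableSet_Ioi).2 (Filter.Eventually.of_forall fun t ht => ?_)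
    rw [Real.norm_of_nonneg (hpos t ht)]
    simp only [hh]
    exact mul_le_mul_of_nonneg_right
      (Real.rpow_le_rpow_of_nonpos hx (le_of_lt ht) (by linarith)) (Real.exp_pos _).le
  have hfrac : ∀ t ∈ Ioi x, 0 ≤ a / (t + a) ^ 2 ∧ a / (t + a) ^ 2 ≤ 1 / (x + a) := by
    intro t ht
    have ht' : x < t := ht
    have ht0 : 0 < t := hx.trans ht
    refine ⟨by positivity, ?_⟩
    rw [div_le_div_iff₀ (by positivity) (by positivity)]
    nlinarith
  have hint2 : IntegrableOn (fun t => h t * (a / (t + a) ^ 2)) (Ioi x) := by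
    refine Integrable.mono' hint (by
      apply Measurable.aestronglyMeasurable; fun_prop) ?_
    refine (ae_restrict_iff' measurableSet_Ioi).2 (Filter.Eventually.of_forall fun t ht => ?_)
    have h1 := hpos t ht
    obtain ⟨h2, h3⟩ := hfrac t ht
    have h4 : 1 / (x + a) ≤ 1 := by rw [div_le_one (by linarith)]; linarith
    rw [Real.norm_of_nonneg (mul_nonneg h1 h2)]
    nlinarith
  have hint3 : IntegrableOn (fun t => h t * (1 - a / (t + a) ^ 2)) (Ioi x) := by
    have := hint.sub hint2
    refine this.congr (Filter.Eventually.of_forall fun t => ?_)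
    simp only [Pi.sub_apply]; ring
  have hlim : Filter.Tendsto (fun t : ℝ => -(t ^ (1 - a) * Real.exp (-t) / (t + a)))
      Filter.atTop (nhds 0) := by
    have h1 := tendsto_rpow_mul_exp_neg_mul_atTop_nhds_zero (1 - a) 1 one_pos
    have h2 : Filter.Tendsto (fun t : ℝ => t + a) Filter.atTop Filter.atTop :=
      Filter.tendsto_atTop_add_const_right _ _ Filter.tendsto_id
    have := (h1.div_atTop h2).neg
    simpa using this
  have hF := integral_Ioi_of_hasDerivAt_of_tendsto' (a := x)
    (fun t ht => aux_deriv a t ha (lt_of_lt_of_le hx ht)) hint3 hlim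
  have hI : uiGamma (1 - a) x = ∫ t in Ioi x, h t := rfl
  have hsplit : ∫ t in Ioi x, h t * (1 - a / (t + a) ^ 2)
      = (∫ t in Ioi x, h t) - ∫ t in Ioi x, h t * (a / (t + a) ^ 2) := by
    rw [← integral_sub hint hint2]
    congr 1; ext t; ring
  have hJ0 : 0 ≤ ∫ t in Ioi x, h t * (a / (t + a) ^ 2) :=
    setIntegral_nonneg measurableSet_Ioi fun t ht => mul_nonneg (hpos t ht) (hfrac t ht).1
  have hJ1 : ∫ t in Ioi x, h t * (a / (t + a) ^ 2) ≤ (∫ t in Ioi x, h t) * (1 / (x + a)) := by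
    rw [← integral_mul_const]
    exact setIntegral_mono_on hint2 (hint.mul_const _) measurableSet_Ioi fun t ht =>
      mul_le_mul_of_nonneg_left (hfrac t ht).2 (hpos t ht)
  have hF' : (∫ t in Ioi x, h t) - ∫ t in Ioi x, h t * (a / (t + a) ^ 2)
      = x ^ (1 - a) * Real.exp (-x) / (x + a) := by
    rw [← hsplit]; exact hF.trans (by ring)
  rw [hI]
  generalize (∫ t in Ioi x, h t) = I at *
  generalize (∫ t in Ioi x, h t * (a / (t + a) ^ 2)) = J at *
  have hK : 0 < Real.exp x * x ^ a := by positivity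
  have hKF : Real.exp x * x ^ a * (x ^ (1 - a) * Real.exp (-x) / (x + a)) = x / (x + a) := by
    have e1 : x ^ a * x ^ (1 - a) = x := by
      rw [← Real.rpow_add hx]; simp
    have e2 : Real.exp x * Real.exp (-x) = 1 := by rw [← Real.exp_add]; simp
    calc _ = (x ^ a * x ^ (1 - a)) * (Real.exp x * Real.exp (-x)) / (x + a) := by ring
      _ = _ := by rw [e1, e2, mul_one]
  generalize Real.exp x * x ^ a = K at *
  rw [← hF'] at hKF
  have hxm : x / (x + a) ≤ 1 := by rw [div_le_one (by linarith)]; linarith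
  have hr : 1 / (x + a) ≤ 1 / 2 := one_div_le_one_div_of_le (by norm_num) hm
  have hr0 : 0 < 1 / (x + a) := by positivity
  have e3 : 2 / (x + a) = 2 * (1 / (x + a)) := by ring
  rw [← hKF] at hxm ⊢
  rw [e3]
  generalize 1 / (x + a) = r at *
  have hKJ : K * J ≤ K * I * r := by nlinarith
  have hKJ0 : 0 ≤ K * J := by positivity
  have e4 : K * I - K * (I - J) = K * J := by ring
  rw [e4, abs_of_nonneg hKJ0]
  have hKI0 : 0 ≤ K * I := by
    have : 0 ≤ I * r := hJ0.trans hJ1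
    have : 0 ≤ I := nonneg_of_mul_nonneg_left this hr0
    positivity
  have hKI : K * I ≤ 2 := by nlinarith
  nlinarith

theorem stmt_13 (p : ℝ) (hp : 1 < p) :
    ∃ C > (0 : ℝ), ∃ N : ℕ, 2 ≤ N ∧ ∀ n : ℕ, N ≤ n →
      |(1 / (n : ℝ)) * Real.exp ((p - 1) * n / p) * ((p - 1) * n / p) ^ ((n : ℝ) / p) *
          uiGamma (1 - (n : ℝ) / p) ((p - 1) * n / p) - (p - 1) / (p * n)| ≤ C / (n : ℝ) ^ 2 := by
  refine ⟨2, by norm_num, 2, le_rfl, fun n hn => ?_⟩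
  have hn' : (2 : ℝ) ≤ n := by exact_mod_cast hn
  have hn0 : (0 : ℝ) < n := by linarith
  have hp0 : 0 < p := by linarith
  have hp1 : 0 < p - 1 := by linarith
  have hs : (p - 1) * n / p + n / p = n := by field_simp; ring
  have key := aux_bound (n / p) ((p - 1) * n / p) (by positivity) (by positivity) (by rw [hs]; exact hn')
  rw [hs] at key
  have e : (1 / (n : ℝ)) * Real.exp ((p - 1) * n / p) * ((p - 1) * n / p) ^ ((n : ℝ) / p) *
          uiGamma (1 - (n : ℝ) / p) ((p - 1) * n / p) - (p - 1) / (p * n)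
      = (1 / (n : ℝ)) * (Real.exp ((p - 1) * n / p) * ((p - 1) * n / p) ^ ((n : ℝ) / p) *
          uiGamma (1 - (n : ℝ) / p) ((p - 1) * n / p) - (p - 1) * n / p / n) := by
    have : (p - 1) / (p * n) = (1 / (n : ℝ)) * ((p - 1) * n / p / n) := by field_simp
    rw [this]; ring
  rw [e, abs_mul, abs_of_pos (by positivity : 0 < 1 / (n : ℝ))]
  calc _ ≤ 1 / (n : ℝ) * (2 / n) := by gcongr
    _ = 2 / (n : ℝ) ^ 2 := by field_simp
end

section
/- Fix a real p ≥ 1 and define, for integers n ≥ 2, f₂(n) = 1 - (p/(n-1)) · Γ(n/p) · Γ((n+p-2)/p) / Γ((n-1)/p)². Then f₂(n) = (p-1)/(pn) + O(n^{-2}) as n → ∞; that is, there exists a constant C > 0 such that |f₂(n) - (p-1)/(pn)| ≤ C/n² for all sufficiently large n. -/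
open MeasureTheory Real Set

noncomputable def RR (a x : ℝ) : ℝ :=
  Real.Gamma (x + a) * Real.Gamma (x + 1 - a) / (Real.Gamma x * Real.Gamma (x + 1))

theorem RR_succ (a x : ℝ) (ha : 0 < a) (ha1 : a < 1) (hx : 0 < x) :
    RR a (x + 1) = RR a x * (1 + a * (1 - a) / (x * (x + 1))) := by
  unfold RR
  have h1 : Real.Gamma (x + 1 + a) = (x + a) * Real.Gamma (x + a) := by
    rw [← Real.Gamma_add_one (by linarith)]; congr 1; ring
  have h2 : Real.Gamma (x + 1 + 1 - a) = (x + 1 - a) * Real.Gamma (x + 1 - a) := by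
    rw [← Real.Gamma_add_one (by linarith)]; congr 1; ring
  have h3 : Real.Gamma (x + 1 + 1) = (x + 1) * Real.Gamma (x + 1) :=
    Real.Gamma_add_one (by linarith)
  have h4 : Real.Gamma (x + 1) = x * Real.Gamma x := Real.Gamma_add_one hx.ne'
  rw [h1, h2, h3, h4]
  have := (Real.Gamma_pos_of_pos hx).ne'
  field_simp
  ring

theorem RR_pos (a x : ℝ) (ha : 0 < a) (ha1 : a < 1) (hx : 0 < x) : 0 < RR a x := by
  have h1 := Real.Gamma_pos_of_pos hx
  have h2 : 0 < Real.Gamma (x + 1) := Real.Gamma_pos_of_pos (by linarith)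
  have h3 : 0 < Real.Gamma (x + a) := Real.Gamma_pos_of_pos (by linarith)
  have h4 : 0 < Real.Gamma (x + 1 - a) := Real.Gamma_pos_of_pos (by linarith)
  unfold RR
  positivity

theorem RR_le (a x : ℝ) (ha : 0 < a) (ha1 : a < 1) (hx : 0 < x) : RR a x ≤ 1 := by
  have h1 := Real.Gamma_pos_of_pos hx
  have h2 : 0 < Real.Gamma (x + 1) := Real.Gamma_pos_of_pos (by linarith)
  have h4 : 0 < Real.Gamma (x + 1 - a) := Real.Gamma_pos_of_pos (by linarith)
  have e1 := Real.Gamma_mul_add_mul_le_rpow_Gamma_mul_rpow_Gamma (s := x) (t := x + 1)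
    (a := 1 - a) (b := a) hx (by linarith) (by linarith) ha (by ring)
  have e2 := Real.Gamma_mul_add_mul_le_rpow_Gamma_mul_rpow_Gamma (s := x) (t := x + 1)
    (a := a) (b := 1 - a) hx (by linarith) ha (by linarith) (by ring)
  rw [show (1 - a) * x + a * (x + 1) = x + a by ring] at e1
  rw [show a * x + (1 - a) * (x + 1) = x + 1 - a by ring] at e2
  unfold RR
  rw [div_le_one (by positivity)]
  refine (mul_le_mul e1 e2 h4.le (by positivity)).trans (le_of_eq ?_)
  have r1 : Real.Gamma x ^ (1 - a) * Real.Gamma x ^ a = Real.Gamma x := by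
    rw [← Real.rpow_add h1]; simp
  have r2 : Real.Gamma (x+1) ^ a * Real.Gamma (x+1) ^ (1 - a) = Real.Gamma (x+1) := by
    rw [← Real.rpow_add h2]; simp
  calc _ = (Real.Gamma x ^ (1 - a) * Real.Gamma x ^ a) *
      (Real.Gamma (x+1) ^ a * Real.Gamma (x+1) ^ (1 - a)) := by ring
    _ = _ := by rw [r1, r2]

theorem Gam_aux (a x : ℝ) (ha : 0 < a) (ha1 : a < 1) (hx : 0 < x) :
    Real.Gamma (x + 1) ≤ Real.Gamma (x + a) * (x + 1) ^ (1 - a) := by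
  have h3 : 0 < Real.Gamma (x + a) := Real.Gamma_pos_of_pos (by linarith)
  have e1 := Real.Gamma_mul_add_mul_le_rpow_Gamma_mul_rpow_Gamma (s := x + a) (t := x + a + 1)
    (a := a) (b := 1 - a) (by linarith) (by linarith) ha (by linarith) (by ring)
  rw [show a * (x + a) + (1 - a) * (x + a + 1) = x + 1 by ring,
    Real.Gamma_add_one (s := x + a) (by linarith), Real.mul_rpow (by linarith) h3.le] at e1
  refine e1.trans ?_
  have r1 : Real.Gamma (x + a) ^ a * Real.Gamma (x + a) ^ (1 - a) = Real.Gamma (x + a) := by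
    rw [← Real.rpow_add h3]; simp
  calc _ = (Real.Gamma (x + a) ^ a * Real.Gamma (x + a) ^ (1 - a)) * (x + a) ^ (1 - a) := by ring
    _ = Real.Gamma (x + a) * (x + a) ^ (1 - a) := by rw [r1]
    _ ≤ _ := by
      gcongr

theorem RR_ge (a x : ℝ) (ha : 0 < a) (ha1 : a < 1) (hx : 0 < x) : x / (x + 1) ≤ RR a x := by
  have h1 := Real.Gamma_pos_of_pos hx
  have h2 : 0 < Real.Gamma (x + 1) := Real.Gamma_pos_of_pos (by linarith)
  have h3 : 0 < Real.Gamma (x + a) := Real.Gamma_pos_of_pos (by linarith)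
  have e1 := Gam_aux a x ha ha1 hx
  have e2 := Gam_aux (1 - a) x (by linarith) (by linarith) hx
  rw [show x + (1 - a) = x + 1 - a by ring, show 1 - (1 - a) = a by ring] at e2
  have e3 := mul_le_mul e1 e2 h2.le (by positivity)
  have r1 : (x + 1) ^ (1 - a) * (x + 1) ^ a = x + 1 := by
    rw [← Real.rpow_add (by linarith)]; simp
  have e4 : Real.Gamma (x + 1) * Real.Gamma (x + 1) ≤
      Real.Gamma (x + a) * Real.Gamma (x + 1 - a) * (x + 1) := by
    refine e3.trans (le_of_eq ?_)
    calc _ = Real.Gamma (x + a) * Real.Gamma (x + 1 - a) *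
        ((x + 1) ^ (1 - a) * (x + 1) ^ a) := by ring
      _ = _ := by rw [r1]
  unfold RR
  rw [div_le_div_iff₀ (by linarith) (by positivity)]
  refine le_trans (le_of_eq ?_) e4
  rw [Real.Gamma_add_one hx.ne']; ring

open Filter Topology in
theorem RR_tendsto (a x : ℝ) (ha : 0 < a) (ha1 : a < 1) (hx : 0 < x) :
    Tendsto (fun N : ℕ => RR a (x + N)) atTop (𝓝 1) := by
  have hi : Tendsto (fun N : ℕ => x + (N : ℝ)) atTop atTop :=
    tendsto_atTop_add_const_left _ _ tendsto_natCast_atTop_atTop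
  have h0 : Tendsto (fun N : ℕ => 1 - 1 / ((x + (N : ℝ)) + 1)) atTop (𝓝 1) := by
    have := (tendsto_inv_atTop_zero.comp (tendsto_atTop_add_const_right _ (1 : ℝ) hi)).const_sub 1
    simpa [Function.comp_def] using this
  refine tendsto_of_tendsto_of_tendsto_of_le_of_le h0 tendsto_const_nhds (fun N => ?_) (fun N => ?_)
  · have hN : 0 < x + (N : ℝ) := by positivity
    refine le_trans (le_of_eq ?_) (RR_ge a (x + N) ha ha1 hN)
    field_simp
    ring
  · exact RR_le a _ ha ha1 (by positivity)

open Filter Topology in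
theorem RR_upper (a x : ℝ) (ha : 0 < a) (ha1 : a < 1) (hx : 0 < x) :
    RR a x * (1 + a * (1 - a) / x) ≤ 1 := by
  have hc : 0 < a * (1 - a) := mul_pos ha (by linarith)
  set c := a * (1 - a) with hcd
  have hm : Monotone (fun N : ℕ => RR a (x + N) * (1 + c / (x + N))) := by
    refine monotone_nat_of_le_succ (fun N => ?_)
    have hN : 0 < x + (N : ℝ) := by positivity
    have hs := RR_succ a (x + N) ha ha1 hN
    have hp := RR_pos a (x + N) ha ha1 hN
    push_cast
    rw [← add_assoc, hs, ← hcd, mul_assoc]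
    refine mul_le_mul_of_nonneg_left ?_ hp.le
    generalize x + (N : ℝ) = y at *
    have : (1 + c / (y * (y + 1))) * (1 + c / (y + 1)) - (1 + c / y)
        = c ^ 2 / (y * (y + 1) ^ 2) := by field_simp; ring
    have : 0 < c ^ 2 / (y * (y + 1) ^ 2) := by positivity
    linarith
  have hi : Tendsto (fun N : ℕ => x + (N : ℝ)) atTop atTop :=
    tendsto_atTop_add_const_left _ _ tendsto_natCast_atTop_atTop
  have ht : Tendsto (fun N : ℕ => RR a (x + N) * (1 + c / (x + N))) atTop (𝓝 1) := by
    have := (RR_tendsto a x ha ha1 hx).mul ((hi.const_div_atTop c).const_add 1)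
    simpa using this
  simpa using hm.ge_of_tendsto ht 0

open Filter Topology in
theorem RR_lower (a x : ℝ) (ha : 0 < a) (ha1 : a < 1) (hx : 0 < x) :
    1 - a * (1 - a) / x ≤ RR a x := by
  have hc : 0 < a * (1 - a) := mul_pos ha (by linarith)
  set c := a * (1 - a) with hcd
  have hm : Antitone (fun N : ℕ => RR a (x + N) - (1 - c / (x + N))) := by
    refine antitone_nat_of_succ_le (fun N => ?_)
    have hN : 0 < x + (N : ℝ) := by positivity
    have hs := RR_succ a (x + N) ha ha1 hN
    have hp := RR_le a (x + N) ha ha1 hN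
    push_cast
    rw [← add_assoc, hs, ← hcd]
    generalize x + (N : ℝ) = y at *
    have e : c / y - c / (y + 1) = c / (y * (y + 1)) := by field_simp; ring
    have : 0 < c / (y * (y + 1)) := by positivity
    nlinarith
  have hi : Tendsto (fun N : ℕ => x + (N : ℝ)) atTop atTop :=
    tendsto_atTop_add_const_left _ _ tendsto_natCast_atTop_atTop
  have ht : Tendsto (fun N : ℕ => RR a (x + N) - (1 - c / (x + N))) atTop (𝓝 0) := by
    have := (RR_tendsto a x ha ha1 hx).sub ((hi.const_div_atTop c).const_sub 1)
    simpa using this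
  have := hm.le_of_tendsto ht 0
  simp at this
  linarith

theorem stmt_14 (p : ℝ) (hp : 1 ≤ p) :
    ∃ C > (0 : ℝ), ∃ N : ℕ, 2 ≤ N ∧ ∀ n : ℕ, N ≤ n →
      |(1 - p / ((n : ℝ) - 1) * (Real.Gamma ((n : ℝ) / p) * Real.Gamma (((n : ℝ) + p - 2) / p) /
          Real.Gamma (((n : ℝ) - 1) / p) ^ 2)) - (p - 1) / (p * n)| ≤ C / (n : ℝ) ^ 2 := by
  refine ⟨2, by norm_num, 2, le_rfl, fun n hn => ?_⟩
  have hn2 : (2 : ℝ) ≤ n := by exact_mod_cast hn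
  generalize (n : ℝ) = m at *
  have hp0 : 0 < p := by linarith
  have hm1 : 0 < m - 1 := by linarith
  have hx : 0 < (m - 1) / p := by positivity
  have hG := Real.Gamma_pos_of_pos hx
  rcases hp.eq_or_lt with rfl | hp1
  · have h4 : Real.Gamma m = (m - 1) * Real.Gamma (m - 1) := by
      rw [← Real.Gamma_add_one hm1.ne']; congr 1; ring
    simp only [div_one] at hG ⊢
    rw [h4, show m + 1 - 2 = m - 1 by ring]
    have : 1 - 1 / (m - 1) * ((m - 1) * Real.Gamma (m - 1) * Real.Gamma (m - 1) /
        Real.Gamma (m - 1) ^ 2) - (1 - 1) / (1 * m) = 0 := by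
      field_simp; simp
    rw [this]
    simp
    positivity
  · have hk0 : 0 < 1 / p := by positivity
    have hk1 : 1 / p < 1 := by rw [div_lt_one hp0]; exact hp1
    have hU := RR_upper (1 / p) ((m - 1) / p) hk0 hk1 hx
    have hL := RR_lower (1 / p) ((m - 1) / p) hk0 hk1 hx
    have hR : p / (m - 1) * (Real.Gamma (m / p) * Real.Gamma ((m + p - 2) / p) /
        Real.Gamma ((m - 1) / p) ^ 2) = RR (1 / p) ((m - 1) / p) := by
      unfold RR
      rw [Real.Gamma_add_one hx.ne', show (m - 1) / p + 1 / p = m / p by ring,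
        show (m - 1) / p + 1 - 1 / p = (m + p - 2) / p by field_simp; ring]
      field_simp
    rw [hR]
    generalize RR (1 / p) ((m - 1) / p) = R at *
    have hc : 1 / p * (1 - 1 / p) / ((m - 1) / p) = (1 - 1 / p) / (m - 1) := by
      field_simp
    have hk : (p - 1) / (p * m) = (1 - 1 / p) / m := by field_simp
    rw [hc] at hU hL
    rw [hk]
    have hka : 0 < 1 - 1 / p := by linarith
    have hkb : 1 - 1 / p < 1 := by linarith
    generalize 1 - 1 / p = k at *
    have hm0 : 0 < m := by linarith
    have e1 : k / (m - 1) - k / m ≤ 2 / m ^ 2 := by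
      rw [show k / (m - 1) - k / m = k / ((m - 1) * m) by field_simp; ring,
        div_le_div_iff₀ (by positivity) (by positivity)]
      nlinarith [mul_pos hm1 hm0, mul_pos hm0 hm0]
    have e2 : R ≤ 1 - k / m := by
      have hq : 0 < k / (m - 1) := by positivity
      have : 1 ≤ (1 - k / m) * (1 + k / (m - 1)) := by
        have : (1 - k / m) * (1 + k / (m - 1)) - 1 = k * (1 - k) / (m * (m - 1)) := by
          field_simp; ring
        have : 0 ≤ k * (1 - k) / (m * (m - 1)) := by
          have : 0 < 1 - k := by linarith
          positivity
        linarith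
      exact le_of_mul_le_mul_right (hU.trans this) (by linarith)
    have : 0 < 2 / m ^ 2 := by positivity
    rw [abs_le]
    constructor <;> linarith
end

section
/- Fix an integer n ≥ 2 and define, for real p > 1, g₁(p) = (1/n) · e^{(p-1)n/p} · ((p-1)n/p)^{n/p} · Γ(1 - n/p, (p-1)n/p). Then g₁(p) = 1/n + O(p^{-1}) as p → ∞; that is, there exists a constant C > 0 such that |g₁(p) - 1/n| ≤ C/p for all sufficiently large p. -/
open MeasureTheory Real Set

lemma uiGamma_bounds (a x : ℝ) (ha : 0 ≤ a) (hx : 0 < x) :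
    uiGamma (1 - a) x ≤ x ^ (-a) * Real.exp (-x) ∧
    x ^ (-a) * Real.exp (-x) ≤ (1 + a / x) * uiGamma (1 - a) x := by
  have hu : uiGamma (1 - a) x = ∫ t in Set.Ioi x, t ^ (-a) * Real.exp (-t) := by
    unfold uiGamma
    have : (1 - a - 1) = -a := by ring
    rw [this]
  have hd : ∀ t ∈ Set.Ici x, HasDerivAt (fun t : ℝ => -(t ^ (-a) * Real.exp (-t)))
      (t ^ (-a) * Real.exp (-t) * (1 + a / t)) t := by
    intro t ht
    have ht0 : 0 < t := lt_of_lt_of_le hx ht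
    have h1 := Real.hasDerivAt_rpow_const (x := t) (p := -a) (Or.inl ht0.ne')
    have h2 : HasDerivAt (fun t : ℝ => Real.exp (-t)) (Real.exp (-t) * (-1)) t :=
      (hasDerivAt_neg t).exp
    have h3 := (h1.mul h2).neg
    refine h3.congr_deriv ?_
    rw [Real.rpow_sub_one ht0.ne']
    field_simp
    ring
  have hpos : ∀ t ∈ Set.Ioi x, 0 ≤ t ^ (-a) * Real.exp (-t) := by
    intro t ht
    have ht0 : 0 < t := lt_trans hx ht
    positivity
  have hpos' : ∀ t ∈ Set.Ioi x, 0 ≤ t ^ (-a) * Real.exp (-t) * (1 + a / t) := by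
    intro t ht
    have ht0 : 0 < t := lt_trans hx ht
    positivity
  have hlim : Filter.Tendsto (fun t : ℝ => -(t ^ (-a) * Real.exp (-t))) Filter.atTop (nhds 0) := by
    have := (tendsto_rpow_mul_exp_neg_mul_atTop_nhds_zero (-a) 1 one_pos).neg
    simpa using this
  have hF := integrableOn_Ioi_deriv_of_nonneg' hd hpos' hlim
  have hI := integral_Ioi_of_hasDerivAt_of_nonneg' hd hpos' hlim
  have hle : ∀ t ∈ Set.Ioi x, t ^ (-a) * Real.exp (-t) ≤
      t ^ (-a) * Real.exp (-t) * (1 + a / t) := by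
    intro t ht
    have ht0 : 0 < t := lt_trans hx ht
    have h1 : 0 ≤ a / t := by positivity
    nlinarith [hpos t ht]
  have hint : IntegrableOn (fun t : ℝ => t ^ (-a) * Real.exp (-t)) (Set.Ioi x) := by
    refine Integrable.mono' hF (by fun_prop) ?_
    refine (ae_restrict_iff' measurableSet_Ioi).2 (Filter.Eventually.of_forall fun t ht => ?_)
    rw [Real.norm_of_nonneg (hpos t ht)]
    exact hle t ht
  have hI' : ∫ t in Set.Ioi x, t ^ (-a) * Real.exp (-t) * (1 + a / t)
      = x ^ (-a) * Real.exp (-x) := by rw [hI]; ring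
  rw [hu, ← hI']
  constructor
  · exact setIntegral_mono_on hint hF measurableSet_Ioi hle
  · rw [← integral_const_mul]
    refine setIntegral_mono_on hF (hint.const_mul _) measurableSet_Ioi ?_
    intro t ht
    have h1 : a / t ≤ a / x := div_le_div_of_nonneg_left ha hx (le_of_lt ht)
    nlinarith [hpos t ht]

theorem stmt_15 (n : ℕ) (hn : 2 ≤ n) :
    ∃ C > (0 : ℝ), ∃ P : ℝ, 1 < P ∧ ∀ p : ℝ, P ≤ p →
      |(1 / (n : ℝ)) * Real.exp ((p - 1) * n / p) * ((p - 1) * n / p) ^ ((n : ℝ) / p) *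
          uiGamma (1 - (n : ℝ) / p) ((p - 1) * n / p) - 1 / (n : ℝ)| ≤ C / p := by
  refine ⟨1, one_pos, 2, by norm_num, fun p hp => ?_⟩
  have hn' : (2 : ℝ) ≤ n := by exact_mod_cast hn
  have hp1 : 0 < p - 1 := by linarith
  have hp0 : 0 < p := by linarith
  have hn0 : (0 : ℝ) < n := by linarith
  have hx : 0 < (p - 1) * n / p := by positivity
  have ha : 0 ≤ (n : ℝ) / p := by positivity
  obtain ⟨h1, h2⟩ := uiGamma_bounds _ _ ha hx
  have hax : 1 + (n : ℝ) / p / ((p - 1) * n / p) = p / (p - 1) := by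
    field_simp
    ring
  rw [hax] at h2
  generalize (p - 1) * n / p = x at *
  generalize (n : ℝ) / p = a at *
  generalize uiGamma (1 - a) x = I at *
  have hK : 0 < Real.exp x * x ^ a := by positivity
  have hinv : Real.exp x * x ^ a * (x ^ (-a) * Real.exp (-x)) = 1 := by
    rw [Real.rpow_neg hx.le, Real.exp_neg]
    have : x ^ a ≠ 0 := (Real.rpow_pos_of_pos hx a).ne'
    have := (Real.exp_pos x).ne'
    field_simp
  have h1' := mul_le_mul_of_nonneg_left h1 hK.le
  have h2' := mul_le_mul_of_nonneg_left h2 hK.le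
  rw [hinv] at h1' h2'
  have e : 1 / (n : ℝ) * Real.exp x * x ^ a * I - 1 / n
      = -(1 / n * (1 - Real.exp x * x ^ a * I)) := by ring
  rw [e, abs_neg]
  generalize hG : Real.exp x * x ^ a * I = G at *
  have h3 : 1 ≤ p / (p - 1) * G := by rw [← hG]; linarith
  have h4 : 1 - G ≤ 1 / p := by
    rw [div_mul_eq_mul_div, le_div_iff₀ hp1] at h3
    rw [le_div_iff₀ hp0]
    linarith
  have h5 : 1 / (n : ℝ) ≤ 1 := by
    rw [div_le_one hn0]; linarith
  have h6 : 0 ≤ 1 - G := by linarith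
  rw [abs_of_nonneg (by positivity)]
  nlinarith
end

section
/- Fix an integer n ≥ 2 and define, for real p ≥ 1, g₂(p) = 1 - (p/(n-1)) · Γ(n/p) · Γ((n+p-2)/p) / Γ((n-1)/p)². Then g₂(p) = 1/n + O(p^{-2}) as p → ∞; that is, there exists a constant C > 0 such that |g₂(p) - 1/n| ≤ C/p² for all sufficiently large p. -/
open MeasureTheory Real Set

lemma gamma_an : AnalyticAt ℝ Real.Gamma 1 := by
  have h : AnalyticAt ℂ Complex.Gamma ((1:ℝ):ℂ) := by
    rw [Complex.analyticAt_iff_eventually_differentiableAt]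
    have : {z : ℂ | 0 < z.re} ∈ nhds ((1:ℝ):ℂ) :=
      (isOpen_lt continuous_const Complex.continuous_re).mem_nhds (by simp)
    filter_upwards [this] with z hz
    apply Complex.differentiableAt_Gamma
    intro m hm
    have hz' : 0 < z.re := hz
    rw [hm] at hz'
    simp at hz'
    have : (0:ℝ) ≤ m := m.cast_nonneg
    linarith
  have := h.re_ofReal
  refine this.congr ?_
  filter_upwards with x
  simp [Complex.Gamma_ofReal]

lemma quad (f : ℝ → ℝ) (hf : AnalyticAt ℝ f 0) (h0 : f 0 = 0) (h1 : HasDerivAt f 0 0) :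
    f =O[nhds 0] (fun t => t ^ 2) := by
  obtain ⟨q, hq⟩ := hf
  have hd := hq.has_fpower_series_dslope_fslope.differentiableAt
  have hO := hd.isBigO_sub
  have e : dslope f 0 0 = 0 := by rw [dslope_same, h1.deriv]
  have := (Asymptotics.isBigO_refl (fun t : ℝ => t) (nhds 0)).mul hO
  refine (this.congr ?_ ?_)
  · intro t
    have := sub_smul_dslope f 0 t
    simp only [e, h0, sub_zero, smul_eq_mul] at this ⊢
    exact this
  · intro t; ring

theorem stmt_16 (n : ℕ) (hn : 2 ≤ n) :
    ∃ C > (0 : ℝ), ∃ P : ℝ, 1 ≤ P ∧ ∀ p : ℝ, P ≤ p →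
      |(1 - p / ((n : ℝ) - 1) * (Real.Gamma ((n : ℝ) / p) * Real.Gamma (((n : ℝ) + p - 2) / p) /
          Real.Gamma (((n : ℝ) - 1) / p) ^ 2)) - 1 / (n : ℝ)| ≤ C / p ^ 2 := by
  have hn' : (2:ℝ) ≤ n := by exact_mod_cast hn
  have han (c : ℝ) : AnalyticAt ℝ (fun t : ℝ => Real.Gamma (1 + c * t)) 0 := by
    apply AnalyticAt.fun_comp (g := Real.Gamma)
    · simpa using gamma_an
    · fun_prop
  have hder (c : ℝ) : HasDerivAt (fun t : ℝ => Real.Gamma (1 + c * t)) (deriv Real.Gamma 1 * c) 0 := by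
    have h1 : HasDerivAt Real.Gamma (deriv Real.Gamma 1) (1 + c * 0) := by
      simpa using gamma_an.differentiableAt.hasDerivAt
    have h2 : HasDerivAt (fun t : ℝ => 1 + c * t) c 0 := by
      simpa using ((hasDerivAt_id (0:ℝ)).const_mul c).const_add 1
    exact h1.comp 0 h2
  have hq := quad (fun t => ((n:ℝ) - 1) / n * (1 - Real.Gamma (1 + n * t) * Real.Gamma (1 + (n - 2) * t)
      / Real.Gamma (1 + (n - 1) * t) ^ 2)) ?_ ?_ ?_
  · obtain ⟨C, hC, hb⟩ := hq.exists_pos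
    have ht : Filter.Tendsto (fun p : ℝ => p⁻¹) Filter.atTop (nhds 0) := tendsto_inv_atTop_zero
    obtain ⟨P, hP⟩ := Filter.eventually_atTop.1 (ht.eventually hb.bound)
    refine ⟨C, hC, max P 1, le_max_right _ _, fun p hp => ?_⟩
    have hp0 : 0 < p := lt_of_lt_of_le one_pos ((le_max_right _ _).trans hp)
    have := hP p ((le_max_left _ _).trans hp)
    rw [Real.norm_eq_abs, Real.norm_eq_abs, abs_of_nonneg (show (0:ℝ) ≤ p⁻¹ ^ 2 by positivity), inv_pow, ← div_eq_mul_inv C] at this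
    have e1 : Real.Gamma (1 + n * p⁻¹) = n / p * Real.Gamma (n / p) := by
      rw [← Real.Gamma_add_one (by positivity), add_comm]; rfl
    have hnp : 0 < ((n:ℝ) - 1) / p := div_pos (by linarith) hp0
    have e2 : Real.Gamma (1 + (n - 1) * p⁻¹) = (n - 1) / p * Real.Gamma ((n - 1) / p) := by
      rw [← Real.Gamma_add_one hnp.ne', add_comm]; rfl
    have e3 : ((n:ℝ) + p - 2) / p = 1 + (n - 2) * p⁻¹ := by field_simp; ring
    have hG := (Real.Gamma_pos_of_pos hnp).ne'
    rw [e1, e2] at this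
    rw [e3]
    have hn1 : (n:ℝ) - 1 ≠ 0 := by linarith
    have hn0 : (n:ℝ) ≠ 0 := by linarith
    refine le_trans (le_of_eq (congrArg abs ?_)) this
    generalize Real.Gamma (((n:ℝ) - 1) / p) = A at *
    generalize Real.Gamma ((n:ℝ) / p) = B at *
    generalize Real.Gamma (1 + ((n:ℝ) - 2) * p⁻¹) = D at *
    field_simp
    ring
  · have h := ((han n).mul (han (n - 2))).div ((han (n-1)).pow 2) (by simp)
    exact analyticAt_const.mul (analyticAt_const.sub h)
  · simp
  · have h := ((hder n).mul (hder (n - 2))).div ((hder (n-1)).pow 2) (by simp)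
    have := (h.const_sub 1).const_mul (((n:ℝ) - 1) / n)
    refine this.congr_deriv ?_
    simp
    right
    ring
end
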